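/- arXiv:1411.0923 — 4 statements merged into one kernel-verified Lean document; each statement's English description precedes it below -/
import Mathlib

section
/- Let n ≥ 1 and write n = 3k + r with 0 ≤ r < 3 (so k = ⌊n/3⌋). Then the optimal rubbling number of the ladder P_n□P_2 equals 1 + 2k if r = 0, and equals 2 + 2k if r = 1 or r = 2. -/
open SimpleGraph

/-- A single rubbling move on `G`: either a pebbling move (remove two pebbles at `v`,
add one at an adjacent vertex `u`) or a strict rubbling move (remove one pebble each at
distinct `v` and `w`, both adjacent to `u`, and add one pebble at `u`). -/
def RubblingStep {V : Type*} [DecidableEq V] (G : SimpleGraph V) (p q : V → ℕ) : Prop :=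
  (∃ v u, G.Adj v u ∧ 2 ≤ p v ∧
      q = fun x => if x = v then p x - 2 else if x = u then p x + 1 else p x) ∨
  (∃ v w u, v ≠ w ∧ G.Adj v u ∧ G.Adj w u ∧ 1 ≤ p v ∧ 1 ≤ p w ∧
      q = fun x => if x = v then p x - 1 else if x = w then p x - 1
          else if x = u then p x + 1 else p x)

/-- `q` is obtainable from `p` by an executable rubbling sequence. -/
def RubblingReach {V : Type*} [DecidableEq V] (G : SimpleGraph V) : (V → ℕ) → (V → ℕ) → Prop :=
  Relation.ReflTransGen (RubblingStep G)

/-- The vertex `u` is `k`-reachable from the distribution `p`. -/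
def KReachable {V : Type*} [DecidableEq V] (G : SimpleGraph V) (p : V → ℕ) (u : V) (k : ℕ) : Prop :=
  ∃ q, RubblingReach G p q ∧ k ≤ q u

/-- `p` is solvable: every vertex is reachable. -/
def Solvable {V : Type*} [DecidableEq V] (G : SimpleGraph V) (p : V → ℕ) : Prop :=
  ∀ u, KReachable G p u 1

/-- The optimal rubbling number: the minimum size of a solvable distribution. -/
noncomputable def optRub {V : Type*} [DecidableEq V] [Fintype V] (G : SimpleGraph V) : ℕ :=
  sInf {m | ∃ p : V → ℕ, Solvable G p ∧ ∑ v, p v = m}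

/-- The ladder `P_n □ P_2`. -/
def ladder (n : ℕ) : SimpleGraph (Fin n × Fin 2) :=
  pathGraph n □ pathGraph 2

/-! ### Lower bound: a nonlinear weight that never increases -/

/-- Rounded-down half-weights collected from the columns to the left of column `i`. -/
def leftW (d : ℕ → ℕ) : ℕ → ℕ
  | 0 => 0
  | i + 1 => d i + leftW d i / 2

/-- Rounded-down half-weights collected from the `K` columns starting with column `i`. -/
def rightW (d : ℕ → ℕ) : ℕ → ℕ → ℕ
  | 0, _ => 0
  | K + 1, i => d i + rightW d K (i + 1) / 2

/-- The effect of a rubbling move on column weights. -/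
def ColStep (n : ℕ) (d d' : ℕ → ℕ) : Prop :=
  ∃ J w, J + 1 ≤ n ∧ d' (J + 1) ≤ d (J + 1) + w ∧
    (∀ i, i ≠ J → i ≠ J + 1 → i ≠ J + 2 → d' i ≤ d i) ∧
    ((d' J + 2 * w ≤ d J ∧ d' (J + 2) ≤ d (J + 2)) ∨
     (d' J ≤ d J ∧ d' (J + 2) + 2 * w ≤ d (J + 2)) ∨
     (d' J + w ≤ d J ∧ d' (J + 2) + w ≤ d (J + 2)))

lemma leftW_mono {d d' : ℕ → ℕ} (i : ℕ) (h : ∀ j < i, d' j ≤ d j) : leftW d' i ≤ leftW d i := by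
  induction i with
  | zero => simp [leftW]
  | succ i ih =>
    have h1 := ih (fun j hj => h j (by omega))
    have h2 := h i (by omega)
    simp only [leftW]
    omega

lemma rightW_mono {d d' : ℕ → ℕ} (K i : ℕ) (h : ∀ j, i ≤ j → d' j ≤ d j) :
    rightW d' K i ≤ rightW d K i := by
  induction K generalizing i with
  | zero => simp [rightW]
  | succ K ih =>
    have h1 := ih (i + 1) (fun j hj => h j (by omega))
    have h2 := h i le_rfl
    simp only [rightW]
    omega

/-- The total weight seen from column `i`. -/
def seen (d : ℕ → ℕ) (N i : ℕ) : ℕ := 2 * d i + leftW d i + rightW d (N - (i + 1)) (i + 1)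

lemma leftW_after {d d' : ℕ → ℕ} {J w : ℕ} (h1 : d' (J + 1) ≤ d (J + 1) + w)
    (h2 : ∀ i, i ≠ J → i ≠ J + 1 → i ≠ J + 2 → d' i ≤ d i)
    (h3 : (d' J + 2 * w ≤ d J ∧ d' (J + 2) ≤ d (J + 2)) ∨
     (d' J ≤ d J ∧ d' (J + 2) + 2 * w ≤ d (J + 2)) ∨
     (d' J + w ≤ d J ∧ d' (J + 2) + w ≤ d (J + 2))) (t : ℕ) :
    leftW d' (J + 3 + t) ≤ leftW d (J + 3 + t) := by
  induction t with
  | zero =>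
    have hL := leftW_mono (d := d) (d' := d') J
      (fun j hj => h2 j (by omega) (by omega) (by omega))
    simp only [leftW]
    omega
  | succ t ih =>
    have := h2 (J + 3 + t) (by omega) (by omega) (by omega)
    rw [← Nat.add_assoc]
    simp only [leftW] at ih ⊢
    omega

lemma rightW_before {d d' : ℕ → ℕ} {J w : ℕ} (h1 : d' (J + 1) ≤ d (J + 1) + w)
    (h2 : ∀ i, i ≠ J → i ≠ J + 1 → i ≠ J + 2 → d' i ≤ d i)
    (h3 : (d' J + 2 * w ≤ d J ∧ d' (J + 2) ≤ d (J + 2)) ∨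
     (d' J ≤ d J ∧ d' (J + 2) + 2 * w ≤ d (J + 2)) ∨
     (d' J + w ≤ d J ∧ d' (J + 2) + w ≤ d (J + 2))) (K i : ℕ) (hi : i ≤ J)
    (hK : J + 2 < i + K) :
    rightW d' K i ≤ rightW d K i := by
  induction K generalizing i with
  | zero => simp [rightW]
  | succ K ih =>
    rcases Nat.lt_or_ge i J with hlt | hge
    · have := ih (i + 1) (by omega) (by omega)
      have := h2 i (by omega) (by omega) (by omega)
      simp only [rightW]
      omega
    · obtain rfl : i = J := by omega
      obtain ⟨K, rfl⟩ : ∃ K', K = K' + 2 := ⟨K - 2, by omega⟩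
      have hR := rightW_mono (d := d) (d' := d') K (i + 3)
        (fun j hj => h2 j (by omega) (by omega) (by omega))
      have e1 : i + 1 + 1 = i + 2 := rfl
      have e2 : i + 2 + 1 = i + 3 := rfl
      simp only [rightW, e1, e2]
      omega

lemma seen_step {n N : ℕ} {d d' : ℕ → ℕ} (hN : n + 2 ≤ N) (h : ColStep n d d') (i : ℕ) :
    seen d' N i ≤ seen d N i := by
  obtain ⟨J, w, hJ, h1, h2, h3⟩ := h
  have hL := leftW_mono (d := d) (d' := d') J
    (fun j hj => h2 j (by omega) (by omega) (by omega))
  unfold seen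
  rcases Nat.lt_or_ge i J with hlt | hge
  · have a1 := rightW_before h1 h2 h3 (N - (i + 1)) (i + 1) (by omega) (by omega)
    have a2 := leftW_mono (d := d) (d' := d') i
      (fun j hj => h2 j (by omega) (by omega) (by omega))
    have a3 := h2 i (by omega) (by omega) (by omega)
    omega
  have hR := fun K => rightW_mono (d := d) (d' := d') K (J + 3)
    (fun j hj => h2 j (by omega) (by omega) (by omega))
  rcases Nat.lt_or_ge i (J + 3) with hlt | hge3
  · obtain ⟨K, rfl⟩ : ∃ K, N = J + 3 + K := ⟨N - (J + 3), by omega⟩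
    have hRK := hR K
    have e1 : J + 1 + 1 = J + 2 := rfl
    have e2 : J + 2 + 1 = J + 3 := rfl
    obtain rfl | rfl | rfl : i = J ∨ i = J + 1 ∨ i = J + 2 := by omega
    · rw [show i + 3 + K - (i + 1) = K + 1 + 1 by omega]
      simp only [rightW, e1, e2]
      omega
    · rw [show J + 3 + K - (J + 1 + 1) = K + 1 by omega]
      simp only [rightW, leftW, e1, e2]
      omega
    · rw [show J + 3 + K - (J + 2 + 1) = K by omega]
      simp only [leftW, e2]
      omega
  · obtain ⟨t, rfl⟩ : ∃ t, i = J + 3 + t := ⟨i - (J + 3), by omega⟩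
    have a1 := leftW_after h1 h2 h3 t
    have a2 := rightW_mono (d := d) (d' := d') (N - (J + 3 + t + 1)) (J + 3 + t + 1)
      (fun j hj => h2 j (by omega) (by omega) (by omega))
    have a3 := h2 (J + 3 + t) (by omega) (by omega) (by omega)
    omega

/-- The purely numerical part of the lower bound. -/
lemma numeric_bound (n : ℕ) (hn : 1 ≤ n) (c d e : ℕ → ℕ) (hc : ∀ i, d i + e i = 3 * c i)
    (hde : ∀ i, 1 ≤ c i → 1 ≤ d i ∧ 1 ≤ e i)
    (h0 : c 0 = 0) (hend : c (n + 1) = 0)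
    (hd : ∀ i, 1 ≤ i → i ≤ n → 4 ≤ seen d (n + 2) i)
    (he : ∀ i, 1 ≤ i → i ≤ n → 4 ≤ seen e (n + 2) i) :
    2 * n + 2 ≤ 3 * ∑ i ∈ Finset.range n, c (i + 1) := by
  have hRstep : ∀ (f : ℕ → ℕ) i, i ≤ n + 1 → rightW f (n + 2 - i) i
      = f i + rightW f (n + 2 - (i + 1)) (i + 1) / 2 := by
    intro f i hi
    rw [show n + 2 - i = (n + 2 - (i + 1)) + 1 by omega]
    rfl
  have hlast : ∀ f : ℕ → ℕ, f (n + 1) = 0 → rightW f (n + 2 - (n + 1)) (n + 1) = 0 := by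
    intro f hf
    rw [hRstep f _ le_rfl, hf, show n + 2 - (n + 1 + 1) = 0 by omega]
    simp [rightW]
  have hfirst : ∀ f : ℕ → ℕ, f 0 = 0 → leftW f 1 = 0 := by
    intro f hf
    simp [leftW, hf]
  have hc0 := hc 0
  have hcn := hc (n + 1)
  have hd0 : d 0 = 0 := by omega
  have he0 : e 0 = 0 := by omega
  have hdn : d (n + 1) = 0 := by omega
  have hen : e (n + 1) = 0 := by omega
  have key : ∀ m, m ≤ n →
      max (leftW d (m + 1)) 1 + max (leftW e (m + 1)) 1
        + max (rightW d (n + 2 - 1) 1) 1 + max (rightW e (n + 2 - 1) 1) 1 + 4 * m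
      ≤ 6 * (∑ i ∈ Finset.range m, c (i + 1)) + 2
        + max (rightW d (n + 2 - (m + 1)) (m + 1)) 1
        + max (rightW e (n + 2 - (m + 1)) (m + 1)) 1 := by
    intro m
    induction m with
    | zero =>
      intro _
      have a1 := hfirst d hd0
      have a2 := hfirst e he0
      simp only [Finset.range_zero, Finset.sum_empty, Nat.zero_add, a1, a2]
      omega
    | succ m ih =>
      intro hm
      have ih := ih (by omega)
      rw [hRstep d (m + 1) (by omega), hRstep e (m + 1) (by omega)] at ih
      have b1 := hd (m + 1) (by omega) hm
      have b2 := he (m + 1) (by omega) hm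
      unfold seen at b1 b2
      have b3 := hc (m + 1)
      have b4 := hde (m + 1)
      have l1 : leftW d (m + 1 + 1) = d (m + 1) + leftW d (m + 1) / 2 := rfl
      have l2 : leftW e (m + 1 + 1) = e (m + 1) + leftW e (m + 1) / 2 := rfl
      rw [Finset.sum_range_succ, l1, l2]
      generalize leftW d (m + 1) = L at *
      generalize leftW e (m + 1) = M at *
      generalize rightW d (n + 2 - (m + 1 + 1)) (m + 1 + 1) = R at *
      generalize rightW e (n + 2 - (m + 1 + 1)) (m + 1 + 1) = S at *
      generalize rightW d (n + 2 - 1) 1 = A at *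
      generalize rightW e (n + 2 - 1) 1 = B at *
      generalize d (m + 1) = x at *
      generalize e (m + 1) = y at *
      generalize c (m + 1) = z at *
      generalize ∑ i ∈ Finset.range m, c (i + 1) = s at *
      clear hRstep hlast hfirst hd he hc hde
      have p1 : ∀ L : ℕ, L / 2 + 1 ≤ max L 1 := by intro L; omega
      have p2 : ∀ L R : ℕ, 4 ≤ L + R →
          max (L / 2) 1 + max (R / 2) 1 + 2 ≤ max L 1 + max R 1 := by intro L R h; omega
      rcases Nat.eq_zero_or_pos z with hz | hz
      · have hx : x = 0 := by omega
        have hy : y = 0 := by omega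
        subst hx hy hz
        have q1 := p2 L R (by omega)
        have q2 := p2 M S (by omega)
        simp only [Nat.zero_add, Nat.add_zero] at ih ⊢
        omega
      · have b5 := b4 hz
        have q1 := p1 L
        have q2 := p1 M
        have q3 := p1 R
        have q4 := p1 S
        rw [max_eq_left (by omega : 1 ≤ x + R / 2), max_eq_left (by omega : 1 ≤ y + S / 2)] at ih
        rw [max_eq_left (by omega : 1 ≤ x + L / 2), max_eq_left (by omega : 1 ≤ y + M / 2)]
        omega
  have k1 := key n le_rfl
  rw [hlast d hdn, hlast e hen] at k1
  have l1 : leftW d (n + 1) = d n + leftW d n / 2 := rfl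
  have l2 : leftW e (n + 1) = e n + leftW e n / 2 := rfl
  have r1 := hRstep d 1 (by omega)
  have r2 := hRstep e 1 (by omega)
  have s1 := hd 1 le_rfl hn
  have s2 := he 1 le_rfl hn
  have s3 := hd n hn le_rfl
  have s4 := he n hn le_rfl
  unfold seen at s1 s2 s3 s4
  have f1 := hfirst d hd0
  have f2 := hfirst e he0
  have g1 := hlast d hdn
  have g2 := hlast e hen
  omega

/-- The pebbles of row `a` in column `i` (columns are numbered from `1`). -/
def colP {n : ℕ} (p : Fin n × Fin 2 → ℕ) (a : Fin 2) : ℕ → ℕ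
  | 0 => 0
  | i + 1 => if h : i < n then p (⟨i, h⟩, a) else 0

/-- The weight of column `i` from the point of view of row `a`. -/
def colD {n : ℕ} (p : Fin n × Fin 2 → ℕ) (a : Fin 2) (i : ℕ) : ℕ :=
  colP p 0 i + colP p 1 i + colP p a i

lemma step_balance {V : Type*} [DecidableEq V] {G : SimpleGraph V} {p q : V → ℕ}
    (h : RubblingStep G p q) : ∃ v w u, G.Adj v u ∧ G.Adj w u ∧
      ∀ x, q x + (if x = v then 1 else 0) + (if x = w then 1 else 0)
        = p x + (if x = u then 1 else 0) := by
  rcases h with ⟨v, u, hvu, hp, rfl⟩ | ⟨v, w, u, hvw, hvu, hwu, hpv, hpw, rfl⟩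
  · refine ⟨v, v, u, hvu, hvu, fun x => ?_⟩
    have := hvu.ne
    by_cases h1 : x = v
    · subst h1
      simp [this]
      omega
    · simp [h1]
      split_ifs <;> rfl
  · refine ⟨v, w, u, hvu, hwu, fun x => ?_⟩
    have := hvu.ne
    have := hwu.ne
    by_cases h1 : x = v
    · subst h1
      simp [*]
    · by_cases h2 : x = w
      · subst h2
        simp [*]
      · simp [h1, h2]
        split_ifs <;> rfl

lemma ladder_adj {n : ℕ} (v u : Fin n × Fin 2) : (ladder n).Adj v u ↔
    ((v.1.val + 1 = u.1.val ∨ u.1.val + 1 = v.1.val) ∧ v.2 = u.2) ∨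
      (v.1.val = u.1.val ∧ v.2 ≠ u.2) := by
  unfold ladder
  rw [boxProd_adj, pathGraph_adj, pathGraph_adj, Fin.ext_iff (a := v.1)]
  obtain ⟨⟨i, hi⟩, a⟩ := v
  obtain ⟨⟨j, hj⟩, b⟩ := u
  fin_cases a <;> fin_cases b <;> simp

lemma colD_balance {n : ℕ} {p q : Fin n × Fin 2 → ℕ} {v w u : Fin n × Fin 2}
    (h : ∀ x, q x + (if x = v then 1 else 0) + (if x = w then 1 else 0)
        = p x + (if x = u then 1 else 0)) (a : Fin 2) (i : ℕ) :
    colD q a i + (if v.1.val + 1 = i then (if v.2 = a then 2 else 1) else 0)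
        + (if w.1.val + 1 = i then (if w.2 = a then 2 else 1) else 0)
      = colD p a i + (if u.1.val + 1 = i then (if u.2 = a then 2 else 1) else 0) := by
  have aux : ∀ (z : Fin n × Fin 2) (j : ℕ) (hj : j < n),
      (if z.1.val + 1 = j + 1 then (if z.2 = a then 2 else 1) else 0)
        = (if ((⟨j, hj⟩, 0) : Fin n × Fin 2) = z then 1 else 0)
          + (if ((⟨j, hj⟩, 1) : Fin n × Fin 2) = z then 1 else 0)
          + (if ((⟨j, hj⟩, a) : Fin n × Fin 2) = z then 1 else 0) := by
    rintro ⟨⟨k, hk⟩, b⟩ j hj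
    by_cases hkj : k = j
    · subst hkj
      fin_cases a <;> fin_cases b <;> simp
    · have : j ≠ k := fun h => hkj h.symm
      simp [hkj, this]
  cases i with
  | zero => simp [colD, colP]
  | succ j =>
    by_cases hj : j < n
    · rw [aux v j hj, aux w j hj, aux u j hj]
      have h0 := h (⟨j, hj⟩, 0)
      have h1 := h (⟨j, hj⟩, 1)
      have h2 := h (⟨j, hj⟩, a)
      simp only [colD, colP, hj, dite_true]
      omega
    · have a1 : v.1.val + 1 ≠ j + 1 := by have := v.1.isLt; omega
      have a2 : w.1.val + 1 ≠ j + 1 := by have := w.1.isLt; omega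
      have a3 : u.1.val + 1 ≠ j + 1 := by have := u.1.isLt; omega
      rw [if_neg a1, if_neg a2, if_neg a3]
      simp [colD, colP, hj]

lemma colStep_of_step {n : ℕ} {p q : Fin n × Fin 2 → ℕ} (h : RubblingStep (ladder n) p q)
    (a : Fin 2) : ColStep n (colD p a) (colD q a) := by
  obtain ⟨v, w, u, hv, hw, hx⟩ := step_balance h
  have hb := colD_balance hx a
  rw [ladder_adj] at hv hw
  have hwt : ∀ z : Fin n × Fin 2,
      (if z.2 = a then 2 else 1) = (if u.2 = a then 2 else 1) ∧ z.2 = u.2 ∨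
      (if z.2 = a then 2 else 1) + (if u.2 = a then 2 else 1) = 3 ∧ z.2 ≠ u.2 := by
    rintro ⟨_, b⟩
    obtain ⟨_, b'⟩ := u
    fin_cases a <;> fin_cases b <;> fin_cases b' <;> simp
  have hwv := hwt v
  have hww := hwt w
  have hwu : (if u.2 = a then 2 else 1) = 1 ∨ (if u.2 = a then 2 else 1) = 2 := by
    split_ifs <;> simp
  have hun := u.1.isLt
  generalize (if v.2 = a then 2 else 1) = wv at *
  generalize (if w.2 = a then 2 else 1) = ww at *
  generalize (if u.2 = a then 2 else 1) = wu at *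
  generalize v.1.val = cv at *
  generalize w.1.val = cw at *
  generalize u.1.val = J at *
  have hv' : (cv + 1 = J ∧ wv = wu) ∨ (cv = J + 1 ∧ wv = wu) ∨ (cv = J ∧ wv + wu = 3) := by
    clear hw hww hb hx hwt
    rcases hv with ⟨h1, h2⟩ | ⟨h1, h2⟩ <;> rcases hwv with ⟨h3, h4⟩ | ⟨h3, h4⟩ <;>
      first | exact absurd h2 h4 | exact absurd h4 h2 | omega
  have hw' : (cw + 1 = J ∧ ww = wu) ∨ (cw = J + 1 ∧ ww = wu) ∨ (cw = J ∧ ww + wu = 3) := by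
    clear hv hwv hb hx hwt
    rcases hw with ⟨h1, h2⟩ | ⟨h1, h2⟩ <;> rcases hww with ⟨h3, h4⟩ | ⟨h3, h4⟩ <;>
      first | exact absurd h2 h4 | exact absurd h4 h2 | omega
  clear hv hw hwv hww hwt hx
  have b0 := hb J
  have b1 := hb (J + 1)
  have b2 := hb (J + 2)
  have hrest : ∀ i, i ≠ J → i ≠ J + 1 → i ≠ J + 2 → colD q a i ≤ colD p a i := by
    intro i h1 h2 h3
    have := hb i
    rw [if_neg (show ¬ J + 1 = i by omega)] at this
    omega
  generalize colD q a = d' at *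
  generalize colD p a = d at *
  clear hb
  simp only [show ¬ (J + 1 = J) by omega, show ¬ (J + 1 = J + 2) by omega, if_true, if_false]
    at b0 b1 b2
  have split3 : ∀ c x : ℕ, (c + 1 = J ∧ x = wu) ∨ (c = J + 1 ∧ x = wu) ∨ (c = J ∧ x + wu = 3) →
      ((if c + 1 = J then x else 0) = wu ∧ (if c + 1 = J + 1 then x else 0) = 0 ∧
        (if c + 1 = J + 2 then x else 0) = 0) ∨
      ((if c + 1 = J then x else 0) = 0 ∧ (if c + 1 = J + 1 then x else 0) = 0 ∧
        (if c + 1 = J + 2 then x else 0) = wu) ∨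
      ((if c + 1 = J then x else 0) = 0 ∧ (if c + 1 = J + 1 then x else 0) + wu = 3 ∧
        (if c + 1 = J + 2 then x else 0) = 0) := by
    intro c x h
    rcases h with ⟨h1, h2⟩ | ⟨h1, h2⟩ | ⟨h1, h2⟩
    · left
      refine ⟨?_, ?_, ?_⟩
      · rw [if_pos h1, h2]
      · rw [if_neg (by omega)]
      · rw [if_neg (by omega)]
    · right; left
      refine ⟨?_, ?_, ?_⟩
      · rw [if_neg (by omega)]
      · rw [if_neg (by omega)]
      · rw [if_pos (by omega), h2]
    · right; right
      refine ⟨?_, ?_, ?_⟩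
      · rw [if_neg (by omega)]
      · rw [if_pos (by omega), h2]
      · rw [if_neg (by omega)]
  have sv := split3 cv wv hv'
  have sw := split3 cw ww hw'
  clear split3 hv' hw'
  generalize (if cv + 1 = J then wv else 0) = v0 at *
  generalize (if cv + 1 = J + 1 then wv else 0) = v1 at *
  generalize (if cv + 1 = J + 2 then wv else 0) = v2 at *
  generalize (if cw + 1 = J then ww else 0) = w0 at *
  generalize (if cw + 1 = J + 1 then ww else 0) = w1 at *
  generalize (if cw + 1 = J + 2 then ww else 0) = w2 at *
  have main : (∃ w, w = wu ∧ v1 = 0 ∧ w1 = 0) ∨ (∃ w, w + 1 = wu ∧ (v1 = 0 ∨ w1 = 0) ∧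
      3 ≤ v1 + w1 + wu) ∨ (v1 + wu = 3 ∧ w1 + wu = 3) := by
    rcases hwu with rfl | rfl
    · rcases sv with h1 | h1 | h1 <;> rcases sw with h2 | h2 | h2 <;>
        first
        | exact Or.inl ⟨1, rfl, h1.2.1, h2.2.1⟩
        | exact Or.inr (Or.inr ⟨h1.2.1, h2.2.1⟩)
        | exact Or.inr (Or.inl ⟨0, rfl, by omega, by omega⟩)
    · rcases sv with h1 | h1 | h1 <;> rcases sw with h2 | h2 | h2 <;>
        first
        | exact Or.inl ⟨2, rfl, h1.2.1, h2.2.1⟩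
        | exact Or.inr (Or.inr ⟨h1.2.1, h2.2.1⟩)
        | exact Or.inr (Or.inl ⟨1, rfl, by omega, by omega⟩)
  rcases main with ⟨w, hw1, hw2, hw3⟩ | ⟨w, hw1, hw2, hw3⟩ | ⟨hw2, hw3⟩
  · exact ⟨J, w, by omega, by omega, hrest, by omega⟩
  · exact ⟨J, w, by omega, by omega, hrest, by omega⟩
  · exact ⟨J, 0, by omega, by omega, hrest, by omega⟩

lemma seen_reach {n : ℕ} {p q : Fin n × Fin 2 → ℕ} (h : RubblingReach (ladder n) p q)
    (a : Fin 2) (i : ℕ) : seen (colD q a) (n + 2) i ≤ seen (colD p a) (n + 2) i := by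
  induction h with
  | refl => exact le_rfl
  | tail _ hs ih => exact (seen_step le_rfl (colStep_of_step hs a) i).trans ih

lemma seen_solvable {n : ℕ} {p : Fin n × Fin 2 → ℕ} (h : Solvable (ladder n) p)
    (a : Fin 2) (i : ℕ) (hi : 1 ≤ i) (hin : i ≤ n) : 4 ≤ seen (colD p a) (n + 2) i := by
  obtain ⟨j, rfl⟩ : ∃ j, i = j + 1 := ⟨i - 1, by omega⟩
  have hj : j < n := by omega
  obtain ⟨q, hq, h1⟩ := h (⟨j, hj⟩, a)
  refine le_trans ?_ (seen_reach hq a (j + 1))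
  have : 2 ≤ colD q a (j + 1) := by
    simp only [colD, colP, hj, dite_true]
    fin_cases a
    · simp only [Fin.zero_eta] at h1 ⊢
      omega
    · simp only [Fin.mk_one] at h1 ⊢
      omega
  unfold seen
  omega

lemma lower_bound {n : ℕ} (hn : 1 ≤ n) {p : Fin n × Fin 2 → ℕ} (h : Solvable (ladder n) p) :
    2 * n + 2 ≤ 3 * ∑ v, p v := by
  have := numeric_bound n hn (fun i => colP p 0 i + colP p 1 i) (colD p 0) (colD p 1)
    (fun i => by simp only [colD]; omega) (fun i hi => by simp only [colD]; omega)
    (by simp [colP]) (by simp [colP])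
    (fun i h1 h2 => seen_solvable h 0 i h1 h2) (fun i h1 h2 => seen_solvable h 1 i h1 h2)
  have hsum : ∑ v, p v = ∑ i ∈ Finset.range n, (colP p 0 (i + 1) + colP p 1 (i + 1)) := by
    rw [Fintype.sum_prod_type, Finset.sum_range]
    refine Finset.sum_congr rfl fun i _ => ?_
    simp [colP]
  rw [hsum]
  exact this

/-! ### Upper bound: an explicit distribution -/

lemma kreach_one {V : Type*} [DecidableEq V] {G : SimpleGraph V} {p : V → ℕ} {u : V}
    (h : 1 ≤ p u) : KReachable G p u 1 := ⟨p, Relation.ReflTransGen.refl, h⟩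

lemma kreach_two {V : Type*} [DecidableEq V] {G : SimpleGraph V} {p : V → ℕ} {v w u : V}
    (hvw : v ≠ w) (hv : G.Adj v u) (hw : G.Adj w u) (h1 : 1 ≤ p v) (h2 : 1 ≤ p w) :
    KReachable G p u 1 := by
  refine ⟨_, Relation.ReflTransGen.single (Or.inr ⟨v, w, u, hvw, hv, hw, h1, h2, rfl⟩), ?_⟩
  simp [hv.ne.symm, hw.ne.symm]

lemma kreach_three {V : Type*} [DecidableEq V] {G : SimpleGraph V} {p : V → ℕ} {a b w v u : V}
    (hab : a ≠ b) (ha : G.Adj a w) (hb : G.Adj b w) (h1 : 1 ≤ p a) (h2 : 1 ≤ p b)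
    (hva : v ≠ a) (hvb : v ≠ b) (hvw : v ≠ w) (hv : G.Adj v u) (hw : G.Adj w u) (h3 : 1 ≤ p v) :
    KReachable G p u 1 := by
  obtain ⟨r, hr, hr1⟩ : KReachable G (fun x => if x = a then p x - 1 else if x = b then p x - 1
          else if x = w then p x + 1 else p x) u 1 := by
    refine kreach_two hvw hv hw ?_ ?_
    · simpa [hva, hvb, hvw] using h3
    · simp [ha.ne.symm, hb.ne.symm]
  exact ⟨r, Relation.ReflTransGen.head (Or.inr ⟨a, b, w, hab, ha, hb, h1, h2, rfl⟩) hr, hr1⟩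

/-- The optimal distribution. -/
def optP (n : ℕ) (v : Fin n × Fin 2) : ℕ :=
  if (v.1.val % 3 = 0 ∧ v.2 = 1) ∨ (v.1.val % 3 = 1 ∧ v.2 = 0) ∨
    (v.1.val + 1 = n ∧ ((n % 3 = 1 ∧ v.2 = 0) ∨ (n % 3 = 0 ∧ v.2 = 1))) then 1 else 0

lemma optP_pos {n : ℕ} {v : Fin n × Fin 2}
    (h : (v.1.val % 3 = 0 ∧ v.2 = 1) ∨ (v.1.val % 3 = 1 ∧ v.2 = 0) ∨
    (v.1.val + 1 = n ∧ ((n % 3 = 1 ∧ v.2 = 0) ∨ (n % 3 = 0 ∧ v.2 = 1)))) : 1 ≤ optP n v := by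
  unfold optP
  rw [if_pos h]

lemma optP_solvable (n : ℕ) : Solvable (ladder n) (optP n) := by
  rintro ⟨⟨i, hi⟩, a⟩
  have h3 : i % 3 = 0 ∨ i % 3 = 1 ∨ i % 3 = 2 := by omega
  have ha : a = 0 ∨ a = 1 := by fin_cases a <;> simp
  rcases h3 with h | h | h <;> rcases ha with rfl | rfl
  · by_cases hl : i + 1 = n
    · exact kreach_one (optP_pos (by right; right; refine ⟨hl, Or.inl ⟨by omega, rfl⟩⟩))
    · refine kreach_two (v := (⟨i, hi⟩, 1)) (w := (⟨i + 1, by omega⟩, 0)) (by simp)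
        ((ladder_adj _ _).2 (by simp)) ((ladder_adj _ _).2 (by simp))
        (optP_pos (by simp; omega)) (optP_pos (by simp; omega))
  · exact kreach_one (optP_pos (by simp [h]))
  · exact kreach_one (optP_pos (by simp [h]))
  · obtain ⟨j, rfl⟩ : ∃ j, i = j + 1 := ⟨i - 1, by omega⟩
    refine kreach_two (v := (⟨j + 1, hi⟩, 0)) (w := (⟨j, by omega⟩, 1)) (by simp)
        ((ladder_adj _ _).2 (by simp)) ((ladder_adj _ _).2 (by simp))
        (optP_pos (by simp; omega)) (optP_pos (by simp; omega))
  · obtain ⟨j, rfl⟩ : ∃ j, i = j + 1 := ⟨i - 1, by omega⟩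
    have hj : 1 ≤ optP n (⟨j, by omega⟩, 0) := optP_pos (by simp; omega)
    by_cases hl : j + 1 + 1 = n
    · refine kreach_two (v := (⟨j, by omega⟩, 0)) (w := (⟨j + 1, hi⟩, 1)) (by simp)
        ((ladder_adj _ _).2 (by simp)) ((ladder_adj _ _).2 (by simp)) hj
        (optP_pos (by simp; omega))
    · by_cases hl2 : j + 2 + 1 = n
      · refine kreach_two (v := (⟨j, by omega⟩, 0)) (w := (⟨j + 2, by omega⟩, 0))
          (by simp [Fin.ext_iff])
          ((ladder_adj _ _).2 (by simp)) ((ladder_adj _ _).2 (by simp)) hj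
          (optP_pos (by simp; omega))
      · refine kreach_three (a := (⟨j + 2, by omega⟩, 1)) (b := (⟨j + 3, by omega⟩, 0))
          (w := (⟨j + 2, by omega⟩, 0)) (v := (⟨j, by omega⟩, 0)) (by simp)
          ((ladder_adj _ _).2 (by simp)) ((ladder_adj _ _).2 (by simp))
          (optP_pos (by simp; omega)) (optP_pos (by simp; omega)) (by simp [Fin.ext_iff])
          (by simp [Fin.ext_iff]) (by simp [Fin.ext_iff])
          ((ladder_adj _ _).2 (by simp)) ((ladder_adj _ _).2 (by simp)) hj
  · obtain ⟨j, rfl⟩ : ∃ j, i = j + 2 := ⟨i - 2, by omega⟩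
    by_cases hl : j + 2 + 1 = n
    · exact kreach_one (optP_pos (by simp; omega))
    · refine kreach_three (a := (⟨j, by omega⟩, 1)) (b := (⟨j + 1, by omega⟩, 0))
          (w := (⟨j + 1, by omega⟩, 1)) (v := (⟨j + 3, by omega⟩, 1)) (by simp)
          ((ladder_adj _ _).2 (by simp)) ((ladder_adj _ _).2 (by simp))
          (optP_pos (by simp; omega)) (optP_pos (by simp; omega)) (by simp [Fin.ext_iff])
          (by simp [Fin.ext_iff]) (by simp [Fin.ext_iff])
          ((ladder_adj _ _).2 (by simp)) ((ladder_adj _ _).2 (by simp))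
          (optP_pos (by simp; omega))

lemma optP_sum (n : ℕ) (hn : 1 ≤ n) : ∑ v, optP n v = (2 * n + 4) / 3 := by
  obtain ⟨m, rfl⟩ : ∃ m, n = m + 1 := ⟨n - 1, by omega⟩
  have base : ∀ m, ∑ i ∈ Finset.range m, (if i % 3 = 2 then 0 else 1) = (2 * m + 2) / 3 := by
    intro m
    induction m with
    | zero => simp
    | succ m ih =>
      rw [Finset.sum_range_succ, ih]
      obtain h | h | h : m % 3 = 0 ∨ m % 3 = 1 ∨ m % 3 = 2 := by omega
      all_goals
        simp only [h]
        norm_num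
        try omega
  have hcol : ∑ v, optP (m + 1) v = ∑ i ∈ Finset.range (m + 1),
      ((if i % 3 = 2 then 0 else 1) + (if i = m ∧ (m + 1) % 3 ≠ 2 then 1 else 0)) := by
    rw [Fintype.sum_prod_type, Finset.sum_range]
    refine Finset.sum_congr rfl fun i _ => ?_
    rw [Fin.sum_univ_two]
    simp only [optP, Fin.isValue, one_ne_zero, zero_ne_one, and_false, and_true, false_or, or_false]
    split_ifs <;> omega
  rw [hcol, Finset.sum_range_succ, Finset.sum_congr rfl
    (g := fun i => if i % 3 = 2 then 0 else 1), base]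
  · obtain h | h | h : m % 3 = 0 ∨ m % 3 = 1 ∨ m % 3 = 2 := by omega
    · rw [if_neg (by omega), if_pos (by omega)]
      omega
    · rw [if_neg (by omega), if_neg (by omega)]
      omega
    · rw [if_pos h, if_pos (by omega)]
      omega
  · intro i hi
    have := Finset.mem_range.1 hi
    rw [if_neg (show ¬ (i = m ∧ (m + 1) % 3 ≠ 2) by omega)]
    rfl

/-- The optimal rubbling number of the ladder `P_n □ P_2`. -/
theorem optRub_ladder (n k r : ℕ) (hn : 1 ≤ n) (hdecomp : n = 3 * k + r) (hr : r < 3) :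
    optRub (ladder n) = if r = 0 then 1 + 2 * k else 2 + 2 * k := by
  have hval : (if r = 0 then 1 + 2 * k else 2 + 2 * k) = (2 * n + 4) / 3 := by
    split_ifs <;> omega
  rw [hval]
  unfold optRub
  apply le_antisymm
  · exact Nat.sInf_le ⟨optP n, optP_solvable n, optP_sum n hn⟩
  · refine le_csInf ⟨_, optP n, optP_solvable n, rfl⟩ ?_
    rintro m ⟨p, hp, rfl⟩
    have := lower_bound hn hp
    omega
end

section
/- Let n ≥ 3 and let p be a pebble distribution on the ladder P_n□P_2 such that every P_3□P_2 subgraph (three consecutive columns) contains at most 2 pebbles in total. If some P_3□P_2 subgraph contains fewer than 2 pebbles, then p is not solvable. -/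
open SimpleGraph

/-- Value that can be accumulated in column `k - 1` from columns `< k`
(each step to the right halves and rounds down). -/
def accum (f : ℕ → ℕ) : ℕ → ℕ
  | 0 => 0
  | k + 1 => f k + accum f k / 2

/-- Add a unit at `j`. -/
def bump (f : ℕ → ℕ) (j : ℕ) : ℕ → ℕ := fun c => f c + if c = j then 1 else 0

theorem accum_bump_ge (f : ℕ → ℕ) (j k : ℕ) (h : k ≤ j) : accum (bump f j) k = accum f k := by
  induction k with
  | zero => rfl
  | succ k ih =>
    have := ih (by omega)
    have hk : k ≠ j := by omega
    simp only [accum, this, bump, if_neg hk]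
    omega

theorem accum_bump_last (f : ℕ → ℕ) (j k : ℕ) (h : k = j + 1) :
    accum (bump f j) k = accum f k + 1 := by
  subst h
  simp only [accum, accum_bump_ge f j j le_rfl, bump, if_true]
  omega

theorem accum_bump_bounds (f : ℕ → ℕ) (j k : ℕ) :
    accum f k ≤ accum (bump f j) k ∧ accum (bump f j) k ≤ accum f k + 1 := by
  induction k with
  | zero => simp [accum]
  | succ k ih =>
    by_cases hk : k < j
    · rw [accum_bump_ge f j (k + 1) (by omega)]; omega
    · by_cases hk' : k = j
      · rw [accum_bump_last f j (k + 1) (by omega)]; omega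
      · simp only [accum, bump, if_neg hk']
        omega

theorem accum_move (f : ℕ → ℕ) (x y z k : ℕ) (hx : x < k) (hy : y < k) (hz : z < k)
    (hxy : x ≤ y + 1 ∧ y ≤ x + 1) (hxz : x ≤ z + 1 ∧ z ≤ x + 1) :
    accum (bump f x) k ≤ accum (bump (bump f y) z) k := by
  induction k with
  | zero => omega
  | succ k ih =>
    have e1 := accum_bump_bounds f x k
    have e2 := accum_bump_bounds f y k
    have e3 := accum_bump_bounds (bump f y) z k
    have a1 := accum_bump_ge f x k
    have a2 := accum_bump_ge f y k
    have a3 := accum_bump_ge (bump f y) z k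
    have b1 := accum_bump_last f x k
    have b2 := accum_bump_last f y k
    have b3 := accum_bump_last (bump f y) z k
    have hf1 : bump f x k = f k + if k = x then 1 else 0 := rfl
    have hf2 : bump (bump f y) z k = (f k + if k = y then 1 else 0) + if k = z then 1 else 0 := rfl
    simp only [accum, hf1, hf2]
    split_ifs <;> omega

theorem accum_bound (f : ℕ → ℕ) (n : ℕ)
    (h : ∀ k, k + 3 ≤ n → f k + f (k + 1) + f (k + 2) ≤ 2) (k : ℕ) (hk : k + 2 ≤ n) :
    accum f (k + 2) ≤ f (k + 1) + f k / 2 := by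
  induction k with
  | zero => simp [accum]
  | succ k ih =>
    have h1 := ih (by omega)
    have h2 := h k (by omega)
    have e : accum f (k + 1 + 2) = f (k + 2) + accum f (k + 2) / 2 := rfl
    rw [e]
    have e2 : f (k + 1 + 1) = f (k + 2) := rfl
    omega

/-- Column totals. -/
def colTot (F : ℕ → Bool → ℕ) : ℕ → ℕ := fun c => F c true + F c false

/-- Column totals, read from the right. -/
def colRev (n : ℕ) (F : ℕ → Bool → ℕ) : ℕ → ℕ :=
  fun c => if c < n then colTot F (n - 1 - c) else 0

def bump2 (F : ℕ → Bool → ℕ) (j : ℕ) (s : Bool) : ℕ → Bool → ℕ :=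
  fun c t => F c t + if c = j ∧ t = s then 1 else 0

theorem colTot_bump2 (F : ℕ → Bool → ℕ) (j : ℕ) (s : Bool) :
    colTot (bump2 F j s) = bump (colTot F) j := by
  funext c
  cases s <;> simp [colTot, bump2, bump] <;> omega

theorem colRev_bump2 (n : ℕ) (F : ℕ → Bool → ℕ) (j : ℕ) (s : Bool) (hj : j < n) :
    colRev n (bump2 F j s) = bump (colRev n F) (n - 1 - j) := by
  funext c
  simp only [colRev, colTot_bump2, bump]
  split_ifs <;> omega

/-- Linear part of the potential. -/
def core (m : ℕ) (F : ℕ → Bool → ℕ) : ℕ :=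
  8 * F m true + 4 * F m false + 4 * F (m + 1) true + 2 * F (m + 1) false
    + 2 * F (m + 2) true + F (m + 2) false

def coreW (m j : ℕ) (s : Bool) : ℕ :=
  if j = m then (if s = true then 8 else 4)
  else if j = m + 1 then (if s = true then 4 else 2)
  else if j = m + 2 then (if s = true then 2 else 1) else 0

theorem core_bump2 (m : ℕ) (F : ℕ → Bool → ℕ) (j : ℕ) (s : Bool) :
    core m (bump2 F j s) = core m F + coreW m j s := by
  simp only [core, bump2, coreW]
  cases s <;> simp <;> split_ifs <;> omega

/-- The potential. -/
def pot (n m : ℕ) (F : ℕ → Bool → ℕ) : ℕ :=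
  core m F + 4 * accum (colTot F) m + accum (colRev n F) (n - (m + 3))

/-- Adjacency of the ladder in coordinates. -/
def LAdj (x : ℕ) (s : Bool) (y : ℕ) (t : Bool) : Prop :=
  (x = y ∧ s ≠ t) ∨ ((x + 1 = y ∨ y + 1 = x) ∧ s = t)

/-- Value of one pebble in the potential near the target. -/
def pebVal (m j : ℕ) (s : Bool) : ℕ :=
  coreW m j s + 4 * (if j + 1 = m then 1 else 0) + (if j = m + 3 then 1 else 0)

theorem pebVal_true (m j : ℕ) :
    (j + 1 = m ∧ pebVal m j true = 4) ∨ (j = m ∧ pebVal m j true = 8) ∨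
    (j = m + 1 ∧ pebVal m j true = 4) ∨ (j = m + 2 ∧ pebVal m j true = 2) ∨
    (j = m + 3 ∧ pebVal m j true = 1) ∨ ((j + 1 < m ∨ m + 3 < j) ∧ pebVal m j true = 0) := by
  simp only [pebVal, coreW, if_true]
  split_ifs <;> omega

theorem pebVal_false (m j : ℕ) :
    (j + 1 = m ∧ pebVal m j false = 4) ∨ (j = m ∧ pebVal m j false = 4) ∨
    (j = m + 1 ∧ pebVal m j false = 2) ∨ (j = m + 2 ∧ pebVal m j false = 1) ∨
    (j = m + 3 ∧ pebVal m j false = 1) ∨ ((j + 1 < m ∨ m + 3 < j) ∧ pebVal m j false = 0) := by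
  simp only [pebVal, coreW, if_false, Bool.false_eq_true]
  split_ifs <;> omega

theorem pebVal_half (m x y : ℕ) (s t : Bool) (h : LAdj y t x s) :
    ((y + 1 < m ∨ m + 3 < y) ∨ pebVal m x s ≤ 2 * pebVal m y t) := by
  have a := pebVal_true m x
  have b := pebVal_false m x
  have c := pebVal_true m y
  have d := pebVal_false m y
  rcases h with ⟨h1, h2⟩ | ⟨h1, h2⟩
  · subst h1
    cases s <;> cases t <;> simp only [ne_eq, not_true_eq_false] at h2 <;> omega
  · subst h2
    cases t
    · clear a c; omega
    · clear b d; omega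

/-- On the inner side of the far columns, staying in the row does not lose value. -/
theorem pebVal_inner (m x y : ℕ) (s t : Bool) (h : LAdj y t x s)
    (hx : (x + 1 = m ∧ m ≤ y) ∨ (x = m + 3 ∧ y ≤ m + 2)) : pebVal m x s ≤ pebVal m y t := by
  have a := pebVal_true m x
  have b := pebVal_false m x
  have c := pebVal_true m y
  have d := pebVal_false m y
  rcases h with ⟨h1, h2⟩ | ⟨h1, h2⟩
  · omega
  · subst h2
    cases t
    · clear a c; omega
    · clear b d; omega

theorem pot_move (n m : ℕ) (F : ℕ → Bool → ℕ) (x y z : ℕ) (s t r : Bool)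
    (hm : m + 2 ≤ n)
    (hx : x < n) (hy : y < n) (hz : z < n) (hxy : LAdj y t x s) (hxz : LAdj z r x s) :
    pot n m (bump2 F x s) ≤ pot n m (bump2 (bump2 F y t) z r) := by
  simp only [pot, core_bump2, colTot_bump2, colRev_bump2 n _ _ _ hx, colRev_bump2 n _ _ _ hy,
    colRev_bump2 n _ _ _ hz]
  have key : ∀ (f : ℕ → ℕ) (x y z k : ℕ), (x ≤ y + 1 ∧ y ≤ x + 1) → (x ≤ z + 1 ∧ z ≤ x + 1) →
      (x < k → y < k → z < k → accum (bump f x) k ≤ accum (bump (bump f y) z) k) ∧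
      (accum f k ≤ accum (bump f x) k ∧ accum (bump f x) k ≤ accum f k + 1) ∧
      (accum f k ≤ accum (bump f y) k) ∧
      (accum (bump f y) k ≤ accum (bump (bump f y) z) k) ∧
      (k ≤ x → accum (bump f x) k = accum f k) ∧
      (k = y + 1 → accum (bump f y) k = accum f k + 1) ∧
      (k = z + 1 → accum (bump (bump f y) z) k = accum (bump f y) k + 1) := by
    intro f x y z k h1 h2
    exact ⟨fun a b c => accum_move f x y z k a b c h1 h2, accum_bump_bounds f x k,
      (accum_bump_bounds f y k).1, (accum_bump_bounds _ z k).1, accum_bump_ge f x k,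
      accum_bump_last f y k, accum_bump_last _ z k⟩
  have hxy' : x ≤ y + 1 ∧ y ≤ x + 1 := by rcases hxy with h | h <;> omega
  have hxz' : x ≤ z + 1 ∧ z ≤ x + 1 := by rcases hxz with h | h <;> omega
  have k1 := key (colTot F) x y z m hxy' hxz'
  have k2 := key (colRev n F) (n - 1 - x) (n - 1 - y) (n - 1 - z) (n - (m + 3))
    (by omega) (by omega)
  clear key
  generalize accum (colTot F) m = a0 at *
  generalize accum (colRev n F) (n - (m + 3)) = b0 at *
  generalize accum (bump (colTot F) x) m = a1 at *
  generalize accum (bump (colTot F) y) m = a2 at *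
  generalize accum (bump (bump (colTot F) y) z) m = a3 at *
  generalize accum (bump (colRev n F) (n - 1 - x)) (n - (m + 3)) = b1 at *
  generalize accum (bump (colRev n F) (n - 1 - y)) (n - (m + 3)) = b2 at *
  generalize accum (bump (bump (colRev n F) (n - 1 - y)) (n - 1 - z)) (n - (m + 3)) = b3 at *
  obtain ⟨p1, p2, p3, p4, p5, p6, p7⟩ := k1
  obtain ⟨q1, q2, q3, q4, q5, q6, q7⟩ := k2
  have q1' : m + 3 ≤ x → m + 3 ≤ y → m + 3 ≤ z → b1 ≤ b3 := fun _ _ _ =>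
    q1 (by omega) (by omega) (by omega)
  have q5' : x ≤ m + 2 → b1 = b0 := fun _ => q5 (by omega)
  have q6' : y = m + 3 → b2 = b0 + 1 := fun _ => q6 (by omega)
  have q7' : z = m + 3 → b3 = b2 + 1 := fun _ => q7 (by omega)
  clear q1 q5 q6 q7
  have hW : ∀ j s, (j < m ∨ m + 2 < j) → coreW m j s = 0 := by
    intro j s hj
    simp only [coreW]
    rw [if_neg (by omega), if_neg (by omega), if_neg (by omega)]
  -- everything on the far left
  by_cases c1 : x < m ∧ y < m ∧ z < m
  · have := p1 c1.1 c1.2.1 c1.2.2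
    have := q5' (by omega)
    rw [hW x s (by omega)]
    omega
  -- everything on the far right
  by_cases c2 : m + 3 ≤ x ∧ m + 3 ≤ y ∧ m + 3 ≤ z
  · have := q1' c2.1 c2.2.1 c2.2.2
    have := p5 (by omega)
    rw [hW x s (by omega)]
    omega
  clear p1 q1'
  have hxr : x + 1 = m ∨ x = m ∨ x = m + 1 ∨ x = m + 2 ∨ x = m + 3 := by omega
  -- lower bounds for the two removed pebbles
  have lowA : a0 + (if y + 1 = m then 1 else 0) + (if z + 1 = m then 1 else 0) ≤ a3 := by
    split_ifs <;> omega
  have lowB : b0 + (if y = m + 3 then 1 else 0) + (if z = m + 3 then 1 else 0) ≤ b3 := by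
    split_ifs <;> omega
  have up : coreW m x s + 4 * a1 + b1 ≤ pebVal m x s + 4 * a0 + b0 := by
    simp only [pebVal]
    generalize coreW m x s = W
    split_ifs <;> omega
  have low : pebVal m y t + pebVal m z r + 4 * a0 + b0
      ≤ coreW m y t + coreW m z r + 4 * a3 + b3 := by
    simp only [pebVal]
    omega
  suffices hs : pebVal m x s ≤ pebVal m y t + pebVal m z r by omega
  have half1 := pebVal_half m x y s t hxy
  have half2 := pebVal_half m x z s r hxz
  by_cases hy' : y + 1 < m ∨ m + 3 < y
  · have := pebVal_inner m x z s r hxz (by omega)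
    omega
  by_cases hz' : z + 1 < m ∨ m + 3 < z
  · have := pebVal_inner m x y s t hxy (by omega)
    omega
  omega

section Main
variable {V : Type*} [Fintype V] [DecidableEq V]

/-- Push a distribution forward to ladder coordinates. -/
def push (X : V → ℕ) (S : V → Bool) (p : V → ℕ) : ℕ → Bool → ℕ :=
  fun c t => ∑ v, if X v = c ∧ S v = t then p v else 0

theorem push_add (X : V → ℕ) (S : V → Bool) (p : V → ℕ) (u : V) :
    push X S (p + Pi.single u 1) = bump2 (push X S p) (X u) (S u) := by
  funext c t
  have : ∀ v, (if X v = c ∧ S v = t then (p + Pi.single u 1 : V → ℕ) v else 0)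
      = (if X v = c ∧ S v = t then p v else 0)
        + if v = u then (if c = X u ∧ t = S u then 1 else 0) else 0 := by
    intro v
    by_cases hv : v = u
    · subst hv
      by_cases h : X v = c ∧ S v = t
      · obtain ⟨rfl, rfl⟩ := h; simp
      · have h' : ¬ (c = X v ∧ t = S v) := fun h' => h ⟨h'.1.symm, h'.2.symm⟩
        simp [h, h']
    · simp [hv]
  simp only [push, this, Finset.sum_add_distrib, bump2]
  simp

theorem step_decomp (G : SimpleGraph V) (p q : V → ℕ) (h : RubblingStep G p q) :
    ∃ (b : V → ℕ) (u v w : V), G.Adj v u ∧ G.Adj w u ∧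
      p = b + Pi.single v 1 + Pi.single w 1 ∧ q = b + Pi.single u 1 := by
  rcases h with ⟨v, u, huv, h2, rfl⟩ | ⟨v, w, u, hvw, hv, hw, h1, h2, rfl⟩
  · refine ⟨fun x => if x = v then p x - 2 else p x, u, v, v, huv, huv, ?_, ?_⟩
    · funext x
      by_cases hx : x = v
      · subst hx; simp; omega
      · simp [hx]
    · funext x
      have hne := huv.ne
      by_cases hx : x = v
      · subst hx; simp [hne]
      · by_cases hx' : x = u
        · subst hx'; simp [hx]
        · simp [hx, hx']
  · refine ⟨fun x => if x = v then p x - 1 else if x = w then p x - 1 else p x, u, v, w, hv, hw,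
      ?_, ?_⟩
    · funext x
      by_cases hx : x = v
      · subst hx; simp [hvw]; omega
      · by_cases hx' : x = w
        · subst hx'; simp [hx]; omega
        · simp [hx, hx']
    · funext x
      have hne := hv.ne
      have hne' := hw.ne
      by_cases hx : x = v
      · subst hx; simp [hne]
      · by_cases hx' : x = w
        · subst hx'; simp [hx, hne']
        · by_cases hx'' : x = u
          · subst hx''; simp [hx, hx']
          · simp [hx, hx', hx'']

theorem pot_reach (G : SimpleGraph V) (X : V → ℕ) (S : V → Bool) (n m : ℕ) (hm : m + 2 ≤ n)
    (hX : ∀ v, X v < n) (hadj : ∀ v u, G.Adj v u → LAdj (X v) (S v) (X u) (S u))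
    (p q : V → ℕ) (h : RubblingReach G p q) :
    pot n m (push X S q) ≤ pot n m (push X S p) := by
  induction h with
  | refl => exact le_rfl
  | tail _ hs ih =>
    refine le_trans ?_ ih
    obtain ⟨b, u, v, w, hv, hw, rfl, rfl⟩ := step_decomp G _ _ hs
    simp only [push_add]
    exact pot_move n m _ _ _ _ _ _ _ hm (hX _) (hX _) (hX _) (hadj _ _ hv) (hadj _ _ hw)

theorem not_solvable_aux (G : SimpleGraph V) (X : V → ℕ) (S : V → Bool) (n m : ℕ)
    (hm : m + 3 ≤ n)
    (hX : ∀ v, X v < n) (hadj : ∀ v u, G.Adj v u → LAdj (X v) (S v) (X u) (S u))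
    (p : V → ℕ)
    (h3 : ∀ k, k + 3 ≤ n → colTot (push X S p) k + colTot (push X S p) (k + 1)
      + colTot (push X S p) (k + 2) ≤ 2)
    (hl : colTot (push X S p) m + colTot (push X S p) (m + 1) ≤ 1)
    (hr : colTot (push X S p) (m + 2) = 0)
    (ht : push X S p (m + 1) true = 0)
    (hr2 : push X S p (m + 3) true ≤ 1)
    (t : V) (htX : X t = m + 1) (htS : S t = true) : ¬ Solvable G p := by
  intro hsol
  obtain ⟨q, hq, h1⟩ := hsol t
  have hpot := pot_reach G X S n (m + 1) (by omega) hX hadj p q hq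
  have hqt : 1 ≤ push X S q (m + 1) true := by
    refine le_trans h1 ?_
    have := Finset.single_le_sum (f := fun v => if X v = m + 1 ∧ S v = true then q v else 0)
      (fun _ _ => Nat.zero_le _) (Finset.mem_univ t)
    simpa [htX, htS, push] using this
  have hout : ∀ c, n ≤ c → colTot (push X S p) c = 0 := by
    intro c hc
    have : ∀ v, X v ≠ c := fun v => by have := hX v; omega
    simp [colTot, push, this]
  generalize hF : push X S p = F at *
  have hA : accum (colTot F) (m + 1) ≤ 1 ∧
      (colTot F (m + 1) = 1 → accum (colTot F) (m + 1) = 0) := by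
    cases m with
    | zero =>
      simp only [accum] at *
      omega
    | succ m =>
      have e1 := accum_bound _ n h3 m (by omega)
      have e2 := h3 m (by omega)
      simp only [Nat.add_assoc, Nat.reduceAdd] at *
      omega
  have hrev : ∀ k, k + 3 ≤ n → colRev n F k + colRev n F (k + 1) + colRev n F (k + 2) ≤ 2 := by
    intro k hk
    have e := h3 (n - 3 - k) (by omega)
    have i1 : n - 1 - k = n - 3 - k + 2 := by omega
    have i2 : n - 1 - (k + 1) = n - 3 - k + 1 := by omega
    have i3 : n - 1 - (k + 2) = n - 3 - k := by omega
    simp only [colRev, i1, i2, i3]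
    split_ifs <;> omega
  have hB : colTot F (m + 3) + accum (colRev n F) (n - (m + 1 + 3)) ≤ 2 := by
    rcases Nat.lt_or_ge n (m + 4) with hn | hn
    · have : n - (m + 1 + 3) = 0 := by omega
      rw [this, hout (m + 3) (by omega)]; simp [accum]
    rcases Nat.lt_or_ge n (m + 5) with hn' | hn'
    · have : n - (m + 1 + 3) = 0 := by omega
      have e := h3 (m + 1) (by omega)
      simp only [Nat.add_assoc, Nat.reduceAdd] at e
      rw [this]; simp only [accum]; omega
    rcases Nat.lt_or_ge n (m + 6) with hn'' | hn''
    · have : n - (m + 1 + 3) = 0 + 1 := by omega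
      have e := h3 (m + 2) (by omega)
      have i1 : n - 1 - 0 = m + 4 := by omega
      simp only [Nat.add_assoc, Nat.reduceAdd] at e
      rw [this]; simp only [accum, colRev, i1]
      split_ifs <;> omega
    · obtain ⟨d, hd⟩ := Nat.exists_eq_add_of_le hn''
      have i0 : n - (m + 1 + 3) = d + 2 := by omega
      have e := h3 (m + 3) (by omega)
      have e1 := accum_bound _ n hrev d (by omega)
      have i1 : n - 1 - d = m + 5 := by omega
      have i2 : n - 1 - (d + 1) = m + 4 := by omega
      have j1 : d < n := by omega
      have j2 : d + 1 < n := by omega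
      have r1 : colRev n F d = colTot F (m + 5) := by simp only [colRev, i1, j1, if_true]
      have r2 : colRev n F (d + 1) = colTot F (m + 4) := by
        simp only [colRev, i2, j2, if_true]
      rw [r1, r2] at e1
      simp only [Nat.add_assoc, Nat.reduceAdd] at e
      rw [i0]
      omega
  simp only [pot, core, Nat.add_assoc, Nat.reduceAdd] at hpot hB
  simp only [colTot] at hl hr hB
  have hA2 := hA.2
  have hc : colTot F (m + 1) = F (m + 1) true + F (m + 1) false := rfl
  omega

end Main

/-- Wrapper for either orientation of the columns. -/
theorem not_solvable_orient (n : ℕ) (p : Fin n × Fin 2 → ℕ) (x : Fin n → ℕ)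
    (hx : ∀ i, x i < n) (hsurj : ∀ c, c < n → ∃ i, x i = c)
    (hadj : ∀ i j : Fin n, (i : ℕ) + 1 = j → (x i + 1 = x j ∨ x j + 1 = x i))
    (C : ℕ → ℕ)
    (hC : ∀ c, C c = ∑ v : Fin n × Fin 2, if x v.1 = c then p v else 0)
    (h3 : ∀ k, k + 3 ≤ n → C k + C (k + 1) + C (k + 2) ≤ 2)
    (m : ℕ) (hm : m + 3 ≤ n) (hl : C m + C (m + 1) ≤ 1) (hr : C (m + 2) = 0) :
    ¬ Solvable (ladder n) p := by
  have hfin : ∀ a : Fin 2, a = 0 ∨ a = 1 := by decide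
  -- choice of target row
  have main : ∀ r : Fin 2,
      (∑ v : Fin n × Fin 2, if x v.1 = m + 1 ∧ v.2 = r then p v else 0) = 0 →
      (∑ v : Fin n × Fin 2, if x v.1 = m + 3 ∧ v.2 = r then p v else 0) ≤ 1 →
      ¬ Solvable (ladder n) p := by
    intro r hr0 hr1
    have hCe : ∀ c, colTot (push (fun v : Fin n × Fin 2 => x v.1) (fun v => decide (v.2 = r)) p) c
        = C c := by
      intro c
      rw [hC]
      simp only [colTot, push]
      rw [← Finset.sum_add_distrib]
      refine Finset.sum_congr rfl fun v _ => ?_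
      by_cases h1 : x v.1 = c <;> by_cases h2 : v.2 = r <;> simp [h1, h2]
    obtain ⟨i, hi⟩ := hsurj (m + 1) (by omega)
    refine not_solvable_aux (ladder n) (fun v => x v.1) (fun v => decide (v.2 = r)) n m hm
      (fun v => hx _) ?_ p ?_ ?_ ?_ ?_ ?_ (i, r) hi (by simp)
    · rintro ⟨i, a⟩ ⟨j, b⟩ h
      simp only [ladder, SimpleGraph.boxProd_adj, SimpleGraph.pathGraph_adj] at h
      rcases h with ⟨h, hab⟩ | ⟨h, hij⟩
      · right
        subst hab
        refine ⟨?_, rfl⟩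
        rcases h with h | h
        · exact hadj i j h
        · exact (hadj j i h).symm
      · left
        subst hij
        refine ⟨rfl, ?_⟩
        rcases hfin a with rfl | rfl <;> rcases hfin b with rfl | rfl <;>
          rcases hfin r with rfl | rfl <;> simp at h ⊢
    · intro k hk; simp only [hCe]; exact h3 k hk
    · simp only [hCe]; exact hl
    · simp only [hCe]; exact hr
    · simpa [push] using hr0
    · simpa [push] using hr1
  have split : ∀ c, C c = (∑ v : Fin n × Fin 2, if x v.1 = c ∧ v.2 = 0 then p v else 0)
      + (∑ v : Fin n × Fin 2, if x v.1 = c ∧ v.2 = 1 then p v else 0) := by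
    intro c
    rw [hC, ← Finset.sum_add_distrib]
    refine Finset.sum_congr rfl fun v _ => ?_
    rcases hfin v.2 with h2 | h2 <;> by_cases h1 : x v.1 = c <;> simp [h1, h2]
  have s1 := split (m + 1)
  have s3 := split (m + 3)
  have hC3 : C (m + 3) + C (m + 1) ≤ 2 := by
    rcases Nat.lt_or_ge n (m + 4) with hn | hn
    · have : C (m + 3) = 0 := by
        rw [hC]
        refine Finset.sum_eq_zero fun v _ => ?_
        have := hx v.1
        rw [if_neg (by omega)]
      omega
    · have := h3 (m + 1) (by omega)
      simp only [Nat.add_assoc, Nat.reduceAdd] at this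
      omega
  have m0 := main 0
  have m1 := main 1
  by_cases hz : (∑ v : Fin n × Fin 2, if x v.1 = m + 1 ∧ v.2 = 0 then p v else 0) = 0 ∧
      (∑ v : Fin n × Fin 2, if x v.1 = m + 3 ∧ v.2 = 0 then p v else 0) ≤ 1
  · exact m0 hz.1 hz.2
  · exact m1 (by omega) (by omega)

/-- If every three consecutive columns of the ladder carry at most 2 pebbles and some
three consecutive columns carry fewer than 2 pebbles, then `p` is not solvable. -/
theorem not_solvable_of_light_block (n : ℕ) (hn : 3 ≤ n) (p : Fin n × Fin 2 → ℕ)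
    (hsmall : ∀ i : ℕ, i + 3 ≤ n →
      (∑ v : Fin n × Fin 2, if i ≤ (v.1 : ℕ) ∧ (v.1 : ℕ) < i + 3 then p v else 0) ≤ 2)
    (hlight : ∃ i : ℕ, i + 3 ≤ n ∧
      (∑ v : Fin n × Fin 2, if i ≤ (v.1 : ℕ) ∧ (v.1 : ℕ) < i + 3 then p v else 0) < 2) :
    ¬ Solvable (ladder n) p := by
  obtain ⟨i, hi, hlt⟩ := hlight
  have tri : ∀ (x : Fin n → ℕ) (k : ℕ),
      (∑ v : Fin n × Fin 2, if x v.1 = k then p v else 0)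
      + (∑ v : Fin n × Fin 2, if x v.1 = k + 1 then p v else 0)
      + (∑ v : Fin n × Fin 2, if x v.1 = k + 2 then p v else 0)
      = ∑ v : Fin n × Fin 2, if k ≤ x v.1 ∧ x v.1 < k + 3 then p v else 0 := by
    intro x k
    rw [← Finset.sum_add_distrib, ← Finset.sum_add_distrib]
    refine Finset.sum_congr rfl fun v _ => ?_
    split_ifs <;> omega
  have rv : ∀ k, k + 3 ≤ n →
      (∑ v : Fin n × Fin 2, if k ≤ n - 1 - (v.1 : ℕ) ∧ n - 1 - (v.1 : ℕ) < k + 3 then p v else 0)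
      = ∑ v : Fin n × Fin 2,
        if n - 3 - k ≤ (v.1 : ℕ) ∧ (v.1 : ℕ) < n - 3 - k + 3 then p v else 0 := by
    intro k hk
    refine Finset.sum_congr rfl fun v _ => ?_
    have := v.1.2
    split_ifs <;> omega
  have rc : ∀ k, k < n → (∑ v : Fin n × Fin 2, if n - 1 - (v.1 : ℕ) = k then p v else 0)
      = ∑ v : Fin n × Fin 2, if (v.1 : ℕ) = n - 1 - k then p v else 0 := by
    intro k hk
    refine Finset.sum_congr rfl fun v _ => ?_
    have := v.1.2
    split_ifs <;> omega
  have t0 := tri (fun j => (j : ℕ)) i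
  by_cases hc : (∑ v : Fin n × Fin 2, if (v.1 : ℕ) = i + 2 then p v else 0) = 0
  · refine not_solvable_orient n p (fun j => (j : ℕ)) (fun j => j.2) (fun c hc => ⟨⟨c, hc⟩, rfl⟩)
      (fun a b h => Or.inl h) _ (fun c => rfl) ?_ i hi ?_ hc
    · intro k hk
      rw [tri (fun j => (j : ℕ))]
      exact hsmall k hk
    · omega
  · refine not_solvable_orient n p (fun j => n - 1 - (j : ℕ)) (fun j => by omega)
      (fun c hc => ⟨⟨n - 1 - c, by omega⟩, by
        show n - 1 - (n - 1 - c) = c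
        omega⟩)
      (fun a b h => by have := b.2; omega) _ (fun c => rfl) ?_ (n - 3 - i)
      (by omega) ?_ ?_
    · intro k hk
      rw [tri (fun j => n - 1 - (j : ℕ)), rv k hk]
      exact hsmall _ (by omega)
    · rw [rc _ (by omega), rc _ (by omega)]
      have i1 : n - 1 - (n - 3 - i) = i + 2 := by omega
      have i2 : n - 1 - (n - 3 - i + 1) = i + 1 := by omega
      rw [i1, i2]
      omega
    · rw [rc _ (by omega)]
      have i1 : n - 1 - (n - 3 - i + 2) = i := by omega
      rw [i1]
      omega
end

section
/- For every n ≥ 5, the optimal rubbling number of the n-prism satisfies ρ_opt(C_n□P_2) ≥ ρ_opt(P_{n−2}□P_2). -/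
open SimpleGraph

/-- The `n`-prism `C_n □ P_2`. -/
def prism (n : ℕ) : SimpleGraph (Fin n × Fin 2) :=
  cycleGraph n □ pathGraph 2


set_option linter.unusedSectionVars false

namespace PrismLB

/-- unit pebble -/
abbrev e {V : Type*} [DecidableEq V] (v : V) : V → ℕ := Pi.single v 1

section general
variable {V : Type*} [DecidableEq V]

lemma e_apply (v x : V) : e v x = if x = v then 1 else 0 := by
  simp [e, Pi.single_apply]

lemma step_decomp {G : SimpleGraph V} {p q : V → ℕ} (h : RubblingStep G p q) :
    ∃ r v w u, G.Adj v u ∧ G.Adj w u ∧ p = r + e v + e w ∧ q = r + e u := by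
  rcases h with ⟨v, u, hvu, h2, rfl⟩ | ⟨v, w, u, hvw, hv, hw, h1, h2, rfl⟩
  · refine ⟨fun x => if x = v then p x - 2 else p x, v, v, u, hvu, hvu, ?_, ?_⟩
    · funext x
      simp only [Pi.add_apply, e_apply]
      split_ifs with h
      · subst h; omega
      · omega
    · funext x
      simp only [Pi.add_apply, e_apply]
      have := hvu.ne
      split_ifs <;> simp_all
  · refine ⟨fun x => if x = v then p x - 1 else if x = w then p x - 1 else p x,
      v, w, u, hv, hw, ?_, ?_⟩
    · funext x
      simp only [Pi.add_apply, e_apply]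
      split_ifs <;> subst_vars <;> first | omega | simp_all
    · funext x
      simp only [Pi.add_apply, e_apply]
      have := hv.ne
      have := hw.ne
      split_ifs <;> simp_all

lemma step_of {G : SimpleGraph V} {r : V → ℕ} {v w u : V} (hv : G.Adj v u) (hw : G.Adj w u) :
    RubblingStep G (r + e v + e w) (r + e u) := by
  have h1 := hv.ne
  have h2 := hw.ne
  by_cases hvw : v = w
  · subst hvw
    left
    refine ⟨v, u, hv, by simp, ?_⟩
    funext x
    simp only [Pi.add_apply, e_apply]
    split_ifs <;> simp_all
  · right
    refine ⟨v, w, u, hvw, hv, hw, by simp only [Pi.add_apply, e_apply, if_true]; omega, by simp, ?_⟩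
    funext x
    simp only [Pi.add_apply, e_apply]
    split_ifs <;> simp_all

/-- `f` is dominated by a reachable distribution. -/
def Dom (G : SimpleGraph V) (p f : V → ℕ) : Prop := ∃ q, RubblingReach G p q ∧ f ≤ q

lemma Dom.mono {G : SimpleGraph V} {p f g : V → ℕ} (h : Dom G p f) (hg : g ≤ f) : Dom G p g := by
  obtain ⟨q, hq, hf⟩ := h
  exact ⟨q, hq, hg.trans hf⟩

lemma Dom.refl (G : SimpleGraph V) (p : V → ℕ) : Dom G p p :=
  ⟨p, Relation.ReflTransGen.refl, le_rfl⟩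

lemma Dom.move {G : SimpleGraph V} {p r : V → ℕ} {v w u : V} (h : Dom G p (r + e v + e w))
    (hv : G.Adj v u) (hw : G.Adj w u) : Dom G p (r + e u) := by
  obtain ⟨q, hq, hf⟩ := h
  obtain ⟨t, rfl⟩ := exists_add_of_le hf
  refine ⟨(r + t) + e u, hq.tail ?_, ?_⟩
  · have := step_of (r := r + t) hv hw
    convert this using 1
    abel
  · intro x; simp only [Pi.add_apply]; omega

lemma Dom.reach {G : SimpleGraph V} {p f : V → ℕ} {u : V} (h : Dom G p f) (hu : 1 ≤ f u) :
    KReachable G p u 1 := by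
  obtain ⟨q, hq, hf⟩ := h
  exact ⟨q, hq, hu.trans (hf u)⟩

lemma reach_iso {G : SimpleGraph V} (φ : V ≃ V) (hφ : ∀ a b, G.Adj a b → G.Adj (φ.symm a) (φ.symm b))
    {p q : V → ℕ} (h : RubblingReach G p q) : RubblingReach G (p ∘ φ) (q ∘ φ) := by
  have key : ∀ v : V, e v ∘ φ = e (φ.symm v) := by
    intro v; funext x; simp [e_apply, Equiv.eq_symm_apply]
  induction h with
  | refl => exact Relation.ReflTransGen.refl
  | tail _ hs ih =>
    refine ih.tail ?_
    obtain ⟨r, v, w, u, hv, hw, rfl, rfl⟩ := step_decomp hs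
    have := step_of (r := r ∘ φ) (hφ _ _ hv) (hφ _ _ hw)
    rw [← key, ← key, ← key] at this
    exact this

lemma solvable_iso {G : SimpleGraph V} (φ : V ≃ V)
    (hφ : ∀ a b, G.Adj a b → G.Adj (φ.symm a) (φ.symm b))
    {p : V → ℕ} (h : Solvable G p) : Solvable G (p ∘ φ) := by
  intro u
  obtain ⟨q, hq, hu⟩ := h (φ u)
  exact ⟨q ∘ φ, reach_iso φ hφ hq, hu⟩

/-- splitting off a marked pebble -/
lemma split_token {a v w : V} {qp r : V → ℕ} (h : e a + qp = r + e v + e w) :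
    (v = a ∧ qp = r + e w) ∨ (w = a ∧ qp = r + e v) ∨
      ∃ r', r = e a + r' ∧ qp = r' + e v + e w := by
  by_cases hv : v = a
  · subst hv
    left
    refine ⟨rfl, ?_⟩
    funext x
    have := congrFun h x
    simp only [Pi.add_apply] at this ⊢
    omega
  by_cases hw : w = a
  · subst hw
    right; left
    refine ⟨rfl, ?_⟩
    funext x
    have := congrFun h x
    simp only [Pi.add_apply] at this ⊢
    omega
  right; right
  have h1 : e a ≤ r := by
    intro x
    have := congrFun h x
    simp only [Pi.add_apply, e_apply] at this ⊢
    split_ifs at this ⊢ <;> first | omega | (subst_vars; simp_all)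
  obtain ⟨r', rfl⟩ := exists_add_of_le h1
  refine ⟨r', rfl, ?_⟩
  funext x
  have := congrFun h x
  simp only [Pi.add_apply] at this ⊢
  omega

end general

section weights
variable {V : Type*} [DecidableEq V] [Fintype V]

/-- total weight -/
def Wt (w : V → ℕ) (q : V → ℕ) : ℕ := ∑ v, q v * w v

lemma Wt_add (w q r : V → ℕ) : Wt w (q + r) = Wt w q + Wt w r := by
  simp [Wt, add_mul, Finset.sum_add_distrib]

lemma Wt_e (w : V → ℕ) (v : V) : Wt w (e v) = w v := by
  simp [Wt, e_apply]

variable {V' : Type*} [DecidableEq V']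

/-- pushforward of a distribution -/
def push (π : V → V') (q : V → ℕ) : V' → ℕ := fun y => ∑ v, if π v = y then q v else 0

lemma push_add (π : V → V') (q r : V → ℕ) : push π (q + r) = push π q + push π r := by
  funext y
  simp only [push, Pi.add_apply, ← Finset.sum_add_distrib]
  refine Finset.sum_congr rfl fun v _ => ?_
  split_ifs <;> simp

lemma push_e (π : V → V') (v : V) : push π (e v) = e (π v) := by
  funext y
  simp only [push, e_apply]
  rw [Finset.sum_eq_single v]
  · simp [eq_comm]
  · intro b _ hb; simp [hb]
  · simp

lemma push_mono (π : V → V') {q r : V → ℕ} (h : q ≤ r) : push π q ≤ push π r := by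
  intro y
  refine Finset.sum_le_sum fun v _ => ?_
  split_ifs
  · exact h v
  · exact le_rfl

lemma le_push (π : V → V') (q : V → ℕ) (v : V) : q v ≤ push π q (π v) := by
  have := Finset.single_le_sum (f := fun x => if π x = π v then q x else 0)
    (fun i _ => Nat.zero_le _) (Finset.mem_univ v)
  simpa [push] using this

lemma sum_push [Fintype V'] (π : V → V') (q : V → ℕ) : ∑ y, push π q y = ∑ v, q v := by
  simp only [push]
  rw [Finset.sum_comm]
  simp

/-- pushed-forward domination -/
def PD (G' : SimpleGraph V') (π : V → V') (p f : V → ℕ) : Prop := Dom G' (push π p) (push π f)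

lemma PD.mono {G' : SimpleGraph V'} {π : V → V'} {p f g : V → ℕ} (h : PD G' π p f) (hg : g ≤ f) :
    PD G' π p g := Dom.mono h (push_mono π hg)

lemma PD.move {G' : SimpleGraph V'} {π : V → V'} {p r : V → ℕ} {v w u : V}
    (h : PD G' π p (r + e v + e w)) (hv : π v = π u ∨ G'.Adj (π v) (π u))
    (hw : π w = π u ∨ G'.Adj (π w) (π u)) : PD G' π p (r + e u) := by
  unfold PD at *
  simp only [push_add, push_e] at h ⊢
  rcases hv with hv | hv
  · rw [hv] at h
    exact h.mono (by intro x; simp only [Pi.add_apply]; omega)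
  rcases hw with hw | hw
  · rw [hw] at h
    exact h.mono (by intro x; simp only [Pi.add_apply]; omega)
  exact h.move hv hw

end weights

section prismsec

lemma prism_adj {n : ℕ} (hn : 5 ≤ n) {v u : Fin n × Fin 2} (h : (prism n).Adj v u) :
    (v.2.val = u.2.val ∧ (v.1.val + 1 = u.1.val ∨ u.1.val + 1 = v.1.val ∨
      (v.1.val = 0 ∧ u.1.val = n - 1) ∨ (v.1.val = n - 1 ∧ u.1.val = 0))) ∨
    (v.1.val = u.1.val ∧ v.2.val + u.2.val = 1) := by
  unfold prism at h
  rw [boxProd_adj, cycleGraph_adj', pathGraph_adj] at h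
  have h1 := v.1.isLt
  have h2 := u.1.isLt
  have h3 := v.2.isLt
  have h4 := u.2.isLt
  rcases h with ⟨h, h'⟩ | ⟨h, h'⟩
  · left
    refine ⟨by rw [h'], ?_⟩
    simp only [Fin.sub_def] at h
    rcases h with h | h
    · by_cases hl : u.1.val ≤ v.1.val
      · rw [show n - u.1.val + v.1.val = (v.1.val - u.1.val) + n by omega, Nat.add_mod_right,
          Nat.mod_eq_of_lt (by omega)] at h
        omega
      · rw [Nat.mod_eq_of_lt (by omega)] at h
        omega
    · by_cases hl : v.1.val ≤ u.1.val
      · rw [show n - v.1.val + u.1.val = (u.1.val - v.1.val) + n by omega, Nat.add_mod_right,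
          Nat.mod_eq_of_lt (by omega)] at h
        omega
      · rw [Nat.mod_eq_of_lt (by omega)] at h
        omega
  · right
    refine ⟨by rw [h'], ?_⟩
    omega

/-- The projection: column `0` is glued to column `n-1`, column `1` to column `2`. -/
def proj (n : ℕ) (hn : 5 ≤ n) (v : Fin n × Fin 2) : Fin (n - 2) × Fin 2 :=
  (⟨if v.1.val = 0 then n - 3 else v.1.val - 2, by have := v.1.isLt; split_ifs <;> omega⟩, v.2)

lemma near {n : ℕ} (hn : 5 ≤ n) {v u : Fin n × Fin 2} (hv : v.1.val ≠ 0) (hu : u.1.val ≠ 0)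
    (h : (v.2.val = u.2.val ∧ (v.1.val - 2 ≤ u.1.val - 2 + 1 ∧ u.1.val - 2 ≤ v.1.val - 2 + 1)) ∨
      v.1.val - 2 = u.1.val - 2) :
    proj n hn v = proj n hn u ∨ (ladder (n - 2)).Adj (proj n hn v) (proj n hn u) := by
  unfold ladder
  rw [boxProd_adj, pathGraph_adj, pathGraph_adj]
  have h3 := v.2.isLt
  have h4 := u.2.isLt
  simp only [proj, hv, hu, if_false, Prod.ext_iff, Fin.ext_iff]
  omega

/-- two-sided weight of a vertex -/
def wt (n : ℕ) (v : Fin n × Fin 2) : ℕ := 2 ^ (n - v.1.val) + 2 ^ v.1.val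
/-- one-sided weight of a vertex -/
def wb (n : ℕ) (v : Fin n × Fin 2) : ℕ := 2 ^ (n - v.1.val)

lemma two_pow_le {a b : ℕ} (h : a ≤ b + 1) : 2 ^ a ≤ 2 * 2 ^ b := by
  rw [← pow_succ']
  exact Nat.pow_le_pow_right (by norm_num) h

lemma wb_le {n : ℕ} {v u : Fin n × Fin 2} (h1 : v.1.val ≤ u.1.val + 1) :
    wb n u ≤ 2 * wb n v := two_pow_le (by omega)

lemma wt_le {n : ℕ} {v u : Fin n × Fin 2} (h1 : v.1.val ≤ u.1.val + 1)
    (h2 : u.1.val ≤ v.1.val + 1) : wt n u ≤ 2 * wt n v := by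
  have a := @two_pow_le (n - u.1.val) (n - v.1.val) (by omega)
  have b := @two_pow_le u.1.val v.1.val (by omega)
  unfold wt; omega

lemma wt_one {n : ℕ} (hn : 5 ≤ n) {v : Fin n × Fin 2} (h : v.1.val = 1 ∨ v.1.val = n - 1) :
    2 * wt n v = 2 ^ n + 4 := by
  obtain ⟨m, rfl⟩ := Nat.exists_eq_add_of_le' hn
  unfold wt
  rcases h with h | h
  · rw [h, show m + 5 - 1 = m + 4 by omega]; ring
  · rw [h, show m + 5 - 1 = m + 4 by omega, show m + 5 - (m + 4) = 1 by omega]; ring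

lemma wt_two {n : ℕ} (hn : 5 ≤ n) {v : Fin n × Fin 2} (h : v.1.val = 2 ∨ v.1.val = n - 2) :
    4 * wt n v = 2 ^ n + 16 := by
  obtain ⟨m, rfl⟩ := Nat.exists_eq_add_of_le' hn
  unfold wt
  rcases h with h | h
  · rw [h, show m + 5 - 2 = m + 3 by omega]; ring
  · rw [h, show m + 5 - 2 = m + 3 by omega, show m + 5 - (m + 3) = 2 by omega]; ring

lemma wt_zero {n : ℕ} {v : Fin n × Fin 2} (h : v.1.val = 0) :
    wt n v = 2 ^ n + 1 := by
  unfold wt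
  rw [h]; simp

lemma wb_one {n : ℕ} (hn : 5 ≤ n) {v : Fin n × Fin 2} (h : v.1.val = 1) :
    2 * wb n v = 2 ^ n := by
  obtain ⟨m, rfl⟩ := Nat.exists_eq_add_of_le' hn
  unfold wb
  rw [h, show m + 5 - 1 = m + 4 by omega]; ring

lemma K_le {n : ℕ} (hn : 5 ≤ n) : 32 ≤ 2 ^ n :=
  le_trans (by norm_num) (Nat.pow_le_pow_right (n := 2) (by norm_num) hn)

/-- column zero is empty -/
def Z {n : ℕ} (q : Fin n × Fin 2 → ℕ) : Prop := ∀ v, v.1.val = 0 → q v = 0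

lemma Z_add {n : ℕ} {q r : Fin n × Fin 2 → ℕ} : Z (q + r) ↔ Z q ∧ Z r := by
  constructor
  · intro h
    constructor <;> intro v hv <;> have := h v hv <;> simp only [Pi.add_apply] at this <;> omega
  · rintro ⟨h1, h2⟩ v hv
    simp [h1 v hv, h2 v hv]

lemma Z_e {n : ℕ} {a : Fin n × Fin 2} : Z (e a) ↔ a.1.val ≠ 0 := by
  constructor
  · intro h h0
    have := h a h0
    simp at this
  · intro h v hv
    rw [e_apply, if_neg]
    rintro rfl
    exact h hv

variable {n : ℕ} (hn : 5 ≤ n)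

/-- The simulation invariant: five phases. -/
inductive Phase (p : Fin n × Fin 2 → ℕ) : (Fin n × Fin 2 → ℕ) → Prop
  | zero (q) : Z q → PD (ladder (n - 2)) (proj n hn) p q → Wt (wt n) q < 2 * 2 ^ n →
      Wt (wb n) q < 2 ^ n → Phase p q
  | tok (a t qp) : a.1.val = 0 → t.1.val = n - 1 → Z qp →
      PD (ladder (n - 2)) (proj n hn) p (qp + e t) → Wt (wt n) qp < 2 ^ n → Phase p (e a + qp)
  | flip (a b qp) : a.1.val = 1 → b.1.val = 1 → a.2.val + b.2.val = 1 → Z qp →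
      PD (ladder (n - 2)) (proj n hn) p (qp + e b) → 2 * Wt (wt n) qp < 2 ^ n → Phase p (e a + qp)
  | dom (q) : Z q → PD (ladder (n - 2)) (proj n hn) p q → 4 * Wt (wt n) q < 5 * 2 ^ n → Phase p q
  | dead (a qp) : a.1.val = 0 → Z qp →
      PD (ladder (n - 2)) (proj n hn) p qp → 4 * Wt (wt n) qp < 2 ^ n → Phase p (e a + qp)

variable {hn} {p : Fin n × Fin 2 → ℕ}

lemma le1 {f g : Fin n × Fin 2 → ℕ} : f ≤ f + g := by
  intro x; simp

lemma adj_path (hn : 5 ≤ n) {v u : Fin n × Fin 2} (h : (prism n).Adj v u) (hv : v.1.val ≠ 0)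
    (hu : u.1.val ≠ 0) :
    (proj n hn v = proj n hn u ∨ (ladder (n - 2)).Adj (proj n hn v) (proj n hn u)) ∧
    wt n u ≤ 2 * wt n v ∧ wb n u ≤ 2 * wb n v := by
  have := prism_adj hn h
  refine ⟨near hn hv hu (by omega), wt_le (by omega) (by omega), wb_le (by omega)⟩

/-- moves into column zero -/
lemma adj_zero (hn : 5 ≤ n) {v u : Fin n × Fin 2} (h : (prism n).Adj v u) (hv : v.1.val ≠ 0)
    (hu : u.1.val = 0) : v.2.val = u.2.val ∧ (v.1.val = 1 ∨ v.1.val = n - 1) := by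
  have := prism_adj hn h
  omega

lemma inv_zero {r : Fin n × Fin 2 → ℕ} {v w u : Fin n × Fin 2}
    (hv : (prism n).Adj v u) (hw : (prism n).Adj w u) (hz : Z (r + e v + e w))
    (hd : PD (ladder (n - 2)) (proj n hn) p (r + e v + e w))
    (h1 : Wt (wt n) (r + e v + e w) < 2 * 2 ^ n) (h2 : Wt (wb n) (r + e v + e w) < 2 ^ n) :
    Phase hn p (r + e u) := by
  simp only [Z_add, Z_e] at hz
  obtain ⟨⟨hr, hv0⟩, hw0⟩ := hz
  simp only [Wt_add, Wt_e] at h1 h2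
  by_cases hu : u.1.val = 0
  · obtain ⟨_, a1⟩ := adj_zero hn hv hv0 hu
    obtain ⟨_, a2⟩ := adj_zero hn hw hw0 hu
    have b1 := wt_one hn a1
    have b2 := wt_one hn a2
    rw [add_comm]
    rcases a1 with a1 | a1
    · rcases a2 with a2 | a2
      · have := wb_one hn a1
        have := wb_one hn a2
        omega
      · refine Phase.tok u w r hu a2 hr (hd.mono ?_) (by omega)
        intro x; simp only [Pi.add_apply]; omega
    · exact Phase.tok u v r hu a1 hr (hd.mono le1) (by omega)
  · obtain ⟨n1, w1, w1'⟩ := adj_path hn hv hv0 hu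
    obtain ⟨n2, w2, w2'⟩ := adj_path hn hw hw0 hu
    refine Phase.zero _ (by simp [Z_add, Z_e, hr, hu]) (hd.move n1 n2) ?_ ?_ <;>
      simp only [Wt_add, Wt_e] <;> omega

lemma inv_dom {r : Fin n × Fin 2 → ℕ} {v w u : Fin n × Fin 2}
    (hv : (prism n).Adj v u) (hw : (prism n).Adj w u) (hz : Z (r + e v + e w))
    (hd : PD (ladder (n - 2)) (proj n hn) p (r + e v + e w))
    (h1 : 4 * Wt (wt n) (r + e v + e w) < 5 * 2 ^ n) :
    Phase hn p (r + e u) := by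
  simp only [Z_add, Z_e] at hz
  obtain ⟨⟨hr, hv0⟩, hw0⟩ := hz
  simp only [Wt_add, Wt_e] at h1
  by_cases hu : u.1.val = 0
  · obtain ⟨_, a1⟩ := adj_zero hn hv hv0 hu
    obtain ⟨_, a2⟩ := adj_zero hn hw hw0 hu
    have b1 := wt_one hn a1
    have b2 := wt_one hn a2
    rw [add_comm]
    exact Phase.dead u r hu hr (hd.mono (by rw [add_assoc]; exact le1)) (by omega)
  · obtain ⟨n1, w1, w1'⟩ := adj_path hn hv hv0 hu
    obtain ⟨n2, w2, w2'⟩ := adj_path hn hw hw0 hu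
    refine Phase.dom _ (by simp [Z_add, Z_e, hr, hu]) (hd.move n1 n2) ?_
    simp only [Wt_add, Wt_e]
    omega

/-- generic path move next to a marked pebble -/
lemma path_move {r x : Fin n × Fin 2 → ℕ} {v w u : Fin n × Fin 2} 
    (hv : (prism n).Adj v u) (hw : (prism n).Adj w u) (hz : Z (r + e v + e w))
    (hd : PD (ladder (n - 2)) (proj n hn) p (r + e v + e w + x))
    (h1 : Wt (wt n) (r + e v + e w) < 2 ^ n) :
    Z (r + e u) ∧ PD (ladder (n - 2)) (proj n hn) p (r + e u + x) ∧
      Wt (wt n) (r + e u) ≤ Wt (wt n) (r + e v + e w) := by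
  simp only [Z_add, Z_e] at hz
  obtain ⟨⟨hr, hv0⟩, hw0⟩ := hz
  simp only [Wt_add, Wt_e] at h1
  by_cases hu : u.1.val = 0
  · obtain ⟨_, a1⟩ := adj_zero hn hv hv0 hu
    obtain ⟨_, a2⟩ := adj_zero hn hw hw0 hu
    have b1 := wt_one hn a1
    have b2 := wt_one hn a2
    omega
  · obtain ⟨n1, w1, w1'⟩ := adj_path hn hv hv0 hu
    obtain ⟨n2, w2, w2'⟩ := adj_path hn hw hw0 hu
    refine ⟨by simp [Z_add, Z_e, hr, hu], ?_, ?_⟩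
    · rw [show r + e v + e w + x = (r + x) + e v + e w by abel] at hd
      have := hd.move n1 n2
      rwa [show r + x + e u = r + e u + x by abel] at this
    · simp only [Wt_add, Wt_e]
      omega

lemma tok_use {r : Fin n × Fin 2 → ℕ} {a t w u : Fin n × Fin 2} (ha : a.1.val = 0)
    (ht : t.1.val = n - 1)
    (hv : (prism n).Adj a u) (hw : (prism n).Adj w u) (hz : Z (r + e w))
    (hd : PD (ladder (n - 2)) (proj n hn) p (r + e w + e t))
    (h1 : Wt (wt n) (r + e w) < 2 ^ n) : Phase hn p (r + e u) := by
  simp only [Z_add, Z_e] at hz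
  obtain ⟨hr, hw0⟩ := hz
  simp only [Wt_add, Wt_e] at h1
  have hK := K_le hn
  have A := prism_adj hn hv
  have B := prism_adj hn hw
  have i1 := a.2.isLt
  have i2 := t.2.isLt
  have i3 := w.2.isLt
  have i4 := u.2.isLt
  by_cases hu : u.1.val = 0
  · -- the token changes its row
    rw [add_comm]
    refine Phase.tok u t r hu ht hr (hd.mono ?_) (by omega)
    intro x; simp only [Pi.add_apply]; omega
  by_cases hu1 : u.1.val = 1
  · have b1 := wt_one hn (Or.inl hu1)
    by_cases hw1 : w.1.val = 1
    · have b2 := wt_one hn (Or.inl hw1)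
      rw [add_comm]
      exact Phase.flip u w r hu1 hw1 (by omega) hr (hd.mono le1) (by omega)
    · have hw2 : w.1.val = 2 := by omega
      have b2 := wt_two hn (Or.inl hw2)
      have n1 := near (v := w) (u := u) hn (by omega) (by omega) (by omega)
      have hp : proj n hn w = proj n hn u := by
        simp only [proj, Prod.ext_iff, Fin.ext_iff]
        simp only [hu1, hw2]
        simp
        omega
      refine Phase.dom _ (by simp [Z_add, Z_e, hr, hu]) ?_ (by simp only [Wt_add, Wt_e]; omega)
      have := hd.mono le1
      unfold PD at this ⊢
      rwa [push_add, push_e, hp, ← push_e, ← push_add] at this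
  · have hu2 : u.1.val = n - 1 := by omega
    have b1 := wt_one hn (Or.inr hu2)
    have n1 := near (v := w) (u := u) hn (by omega) (by omega) (by omega)
    have hb : Wt (wt n) r + wt n u ≤ Wt (wt n) r + wt n w + 2 ^ n / 4 := by
      by_cases hw1 : w.1.val = n - 1
      · have b2 := wt_one hn (Or.inr hw1)
        omega
      · have b2 := wt_two (v := w) hn (Or.inr (by omega))
        omega
    refine Phase.dom _ (by simp [Z_add, Z_e, hr, hu]) ?_ (by simp only [Wt_add, Wt_e]; omega)
    exact hd.move n1 (near hn (by omega) (by omega) (by omega))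

lemma flip_use {r : Fin n × Fin 2 → ℕ} {a b w u : Fin n × Fin 2} (ha : a.1.val = 1)
    (hb : b.1.val = 1) (hab : a.2.val + b.2.val = 1)
    (hv : (prism n).Adj a u) (hw : (prism n).Adj w u) (hz : Z (r + e w))
    (hd : PD (ladder (n - 2)) (proj n hn) p (r + e w + e b))
    (h1 : 2 * Wt (wt n) (r + e w) < 2 ^ n) : Phase hn p (r + e u) := by
  simp only [Z_add, Z_e] at hz
  obtain ⟨hr, hw0⟩ := hz
  simp only [Wt_add, Wt_e] at h1
  have hK := K_le hn
  have A := prism_adj hn hv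
  have B := prism_adj hn hw
  have i1 := a.2.isLt
  have i2 := b.2.isLt
  have i3 := w.2.isLt
  have i4 := u.2.isLt
  have hw1 : ¬ (w.1.val = 1 ∨ w.1.val = n - 1) := by
    intro h
    have := wt_one hn h
    omega
  have hu : u.1.val ≠ 0 := by omega
  have hwu : wt n u ≤ 2 * wt n w := (adj_path hn hw hw0 hu).2.1
  refine Phase.dom _ (by simp [Z_add, Z_e, hr, hu]) ?_ (by simp only [Wt_add, Wt_e]; omega)
  refine hd.move (near hn (by omega) (by omega) (by omega)) (near hn (by omega) (by omega) (by omega))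

lemma dead_use (hn : 5 ≤ n) {r : Fin n × Fin 2 → ℕ} {a w u : Fin n × Fin 2} (ha : a.1.val = 0)
    (hv : (prism n).Adj a u) (hw : (prism n).Adj w u) (hz : Z (r + e w))
    (h1 : 4 * Wt (wt n) (r + e w) < 2 ^ n) : False := by
  simp only [Z_add, Z_e] at hz
  obtain ⟨hr, hw0⟩ := hz
  simp only [Wt_add, Wt_e] at h1
  have A := prism_adj hn hv
  have B := prism_adj hn hw
  have hw1 : ¬ (w.1.val = 1 ∨ w.1.val = n - 1) := by
    intro h
    have := wt_one hn h
    omega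
  have hw2 : ¬ (w.1.val = 2 ∨ w.1.val = n - 2) := by
    intro h
    have := wt_two hn h
    omega
  omega

lemma Phase.step {q q' : Fin n × Fin 2 → ℕ} (h : Phase hn p q)
    (hs : RubblingStep (prism n) q q') : Phase hn p q' := by
  obtain ⟨r, v, w, u, hv, hw, hq, rfl⟩ := step_decomp hs
  cases h with
  | zero _ a b c d => subst hq; exact inv_zero hv hw a b c d
  | dom _ a b c => subst hq; exact inv_dom hv hw a b c
  | tok a t qp ha ht hz hd hW =>
    rcases split_token hq with ⟨rfl, rfl⟩ | ⟨rfl, rfl⟩ | ⟨r', rfl, rfl⟩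
    · exact tok_use ha ht hv hw hz hd hW
    · exact tok_use ha ht hw hv hz hd hW
    · obtain ⟨x, y, z⟩ := path_move hv hw hz hd hW
      rw [add_assoc]
      exact Phase.tok a t _ ha ht x y (by omega)
  | flip a b qp ha hb hab hz hd hW =>
    rcases split_token hq with ⟨rfl, rfl⟩ | ⟨rfl, rfl⟩ | ⟨r', rfl, rfl⟩
    · exact flip_use ha hb hab hv hw hz hd hW
    · exact flip_use ha hb hab hw hv hz hd hW
    · obtain ⟨x, y, z⟩ := path_move hv hw hz hd (by omega)
      rw [add_assoc]
      exact Phase.flip a b _ ha hb hab x y (by omega)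
  | dead a qp ha hz hd hW =>
    rcases split_token hq with ⟨rfl, rfl⟩ | ⟨rfl, rfl⟩ | ⟨r', rfl, rfl⟩
    · exact (dead_use hn ha hv hw hz hW).elim
    · exact (dead_use hn ha hw hv hz hW).elim
    · obtain ⟨x, y, z⟩ := path_move (x := 0) hv hw hz hd (by omega)
      rw [add_assoc]
      exact Phase.dead a _ ha x y (by omega)

lemma Phase.reach {q q' : Fin n × Fin 2 → ℕ} (h : Phase hn p q)
    (hs : RubblingReach (prism n) q q') : Phase hn p q' := by
  induction hs with
  | refl => exact h
  | tail _ hs ih => exact ih.step hs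

lemma Phase.target {q : Fin n × Fin 2 → ℕ} (h : Phase hn p q) {u : Fin n × Fin 2}
    (hu : 2 ≤ u.1.val) (hq : 1 ≤ q u) :
    KReachable (ladder (n - 2)) (push (proj n hn) p) (proj n hn u) 1 := by
  have key : ∀ f, PD (ladder (n - 2)) (proj n hn) p f → 1 ≤ f u →
      KReachable (ladder (n - 2)) (push (proj n hn) p) (proj n hn u) 1 :=
    fun f hf h1 => Dom.reach hf (h1.trans (le_push _ _ _))
  have key2 : ∀ a : Fin n × Fin 2, a.1.val < 2 → e a u = 0 := by
    intro a ha
    rw [e_apply, if_neg]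
    rintro rfl
    omega
  cases h with
  | zero _ a b c d => exact key _ b hq
  | dom _ a b c => exact key _ b hq
  | tok a t qp ha ht hz hd hW =>
    have := key2 a (by omega)
    refine key _ (hd.mono le1) ?_
    simp only [Pi.add_apply] at hq; omega
  | flip a b qp ha hb hab hz hd hW =>
    have := key2 a (by omega)
    refine key _ (hd.mono le1) ?_
    simp only [Pi.add_apply] at hq; omega
  | dead a qp ha hz hd hW =>
    have := key2 a (by omega)
    refine key _ hd ?_
    simp only [Pi.add_apply] at hq; omega

/-- if the invariant holds initially, the pushed-forward distribution is solvable -/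
lemma Phase.solvable (h : Phase hn p p) (hp : Solvable (prism n) p) :
    Solvable (ladder (n - 2)) (push (proj n hn) p) := by
  intro y
  have h1 := y.1.isLt
  obtain ⟨q, hq, hu⟩ := hp (⟨y.1.val + 2, by omega⟩, y.2)
  have := (h.reach hq).target (by simp) hu
  convert this using 1
  simp [proj]

lemma Phase.begins (hW : Wt (wt n) p < 2 * 2 ^ n) (hB : Z p → Wt (wb n) p < 2 ^ n) :
    Phase hn p p := by
  by_cases hz : Z p
  · exact Phase.zero p hz (Dom.refl _ _) hW (hB hz)
  · unfold Z at hz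
    push Not at hz
    obtain ⟨a, ha, hpa⟩ := hz
    have h1 : e a ≤ p := by
      intro x
      rw [e_apply]
      split_ifs with h
      · subst h; exact Nat.one_le_iff_ne_zero.mpr hpa
      · exact Nat.zero_le _
    obtain ⟨r, rfl⟩ := exists_add_of_le h1
    rw [Wt_add, Wt_e, wt_zero ha] at hW
    have hK := K_le hn
    have hr : Z r := by
      intro v hv
      by_contra h0
      have h2 : e v ≤ r := by
        intro x
        rw [e_apply]
        split_ifs with h
        · subst h; exact Nat.one_le_iff_ne_zero.mpr h0
        · exact Nat.zero_le _
      obtain ⟨r', rfl⟩ := exists_add_of_le h2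
      rw [Wt_add, Wt_e, wt_zero hv] at hW
      omega
    refine Phase.tok a (⟨n - 1, by omega⟩, a.2) r ha rfl hr ?_ (by omega)
    have hp : proj n hn a = proj n hn (⟨n - 1, by omega⟩, a.2) := by
      simp only [proj, Prod.ext_iff, Fin.ext_iff, ha, and_true, if_true]
      rw [if_neg (by omega)]
      omega
    unfold PD
    have := Dom.refl (ladder (n - 2)) (push (proj n hn) (e a + r))
    convert this using 1
    rw [push_add, push_add, push_e, push_e, hp, add_comm]

end prismsec

section rotation
variable {n : ℕ} [NeZero n]

/-- rotation of the prism -/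
def rot (c : Fin n) : Fin n × Fin 2 ≃ Fin n × Fin 2 := (Equiv.addRight c).prodCongr (Equiv.refl _)

/-- reflection of the prism -/
def refl : Fin n × Fin 2 ≃ Fin n × Fin 2 := (Equiv.neg (Fin n)).prodCongr (Equiv.refl _)

lemma rot_adj (c : Fin n) (a b : Fin n × Fin 2) (h : (prism n).Adj a b) :
    (prism n).Adj ((rot c).symm a) ((rot c).symm b) := by
  unfold prism at h ⊢
  rw [boxProd_adj, cycleGraph_adj'] at h ⊢
  simpa [rot, ← sub_eq_add_neg] using h

lemma refl_adj (a b : Fin n × Fin 2) (h : (prism n).Adj a b) :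
    (prism n).Adj (refl.symm a) (refl.symm b) := by
  unfold prism at h ⊢
  rw [boxProd_adj, cycleGraph_adj'] at h ⊢
  have h1 : -a.1 - -b.1 = b.1 - a.1 := by abel
  have h2 : -b.1 - -a.1 = a.1 - b.1 := by abel
  simpa [refl, h1, h2, or_comm] using h

lemma sum_wt : ∀ m : ℕ, ∑ i ∈ Finset.range m, (2 ^ (m - i) + 2 ^ i) + 3 = 3 * 2 ^ m := by
  have h1 : ∀ m : ℕ, ∑ i ∈ Finset.range m, 2 ^ i + 1 = 2 ^ m := by
    intro m
    induction m with
    | zero => simp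
    | succ k ih => rw [Finset.sum_range_succ, pow_succ]; omega
  have h2 : ∀ m : ℕ, ∑ i ∈ Finset.range m, 2 ^ (m - i) + 2 = 2 * 2 ^ m := by
    intro m
    induction m with
    | zero => simp
    | succ k ih =>
      rw [Finset.sum_range_succ']
      simp only [Nat.add_sub_add_right, Nat.sub_zero, pow_succ]
      omega
  intro m
  rw [Finset.sum_add_distrib]
  have := h1 m
  have := h2 m
  omega

lemma sum_rot (p : Fin n × Fin 2 → ℕ) :
    ∑ c : Fin n, Wt (wt n) (p ∘ rot c) + 3 * ∑ v, p v = (∑ v, p v) * (3 * 2 ^ n) := by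
  have h : ∑ c : Fin n, Wt (wt n) (p ∘ rot c) =
      (∑ v, p v) * ∑ j : Fin n, (2 ^ (n - j.val) + 2 ^ j.val) := by
    simp only [Wt]
    rw [Finset.sum_comm, Fintype.sum_prod_type, Finset.mul_sum]
    refine Finset.sum_congr rfl fun j _ => ?_
    rw [Finset.sum_comm]
    simp only [← Finset.sum_mul, wt]
    congr 1
    rw [Finset.sum_comm, Finset.sum_comm, Fintype.sum_prod_type]
    refine (Equiv.sum_comp (Equiv.addLeft j) _).symm.trans ?_ |>.symm
    simp [rot]
  rw [h, Fin.sum_univ_eq_sum_range (fun i => 2 ^ (n - i) + 2 ^ i) n, ← sum_wt n]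
  ring

lemma exists_rot (p : Fin n × Fin 2 → ℕ) (hp : 3 * ∑ v, p v < 2 * n) :
    ∃ c : Fin n, Wt (wt n) (p ∘ rot c) < 2 * 2 ^ n := by
  by_contra! h
  have h1 := Finset.sum_le_sum (s := Finset.univ) (fun c _ => h c)
  simp only [Finset.sum_const, Finset.card_univ, Fintype.card_fin, smul_eq_mul] at h1
  have h2 := sum_rot p
  have h3 : 0 < 2 ^ n := by positivity
  have h4 : (3 * ∑ v, p v) * 2 ^ n < (2 * n) * 2 ^ n := Nat.mul_lt_mul_of_pos_right hp h3
  have h5 : (∑ v, p v) * (3 * 2 ^ n) = (3 * ∑ v, p v) * 2 ^ n := by ring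
  have h6 : n * (2 * 2 ^ n) = (2 * n) * 2 ^ n := by ring
  omega

lemma Wt_refl (p : Fin n × Fin 2 → ℕ) (hz : Z p) :
    Wt (wb n) p + Wt (wb n) (p ∘ refl) = Wt (wt n) p ∧ Wt (wt n) (p ∘ refl) = Wt (wt n) p := by
  have hneg : ∀ v : Fin n × Fin 2, v.1.val ≠ 0 → (refl v).1.val = n - v.1.val := by
    intro v hv
    have := v.1.isLt
    simp only [refl, Equiv.prodCongr_apply, Prod.map, Equiv.neg_apply, Fin.val_neg]
    rw [if_neg]
    intro h
    apply hv
    rw [h]; simp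
  have hinv : ∀ v : Fin n × Fin 2, refl (refl v) = v := by
    rintro ⟨a, b⟩; simp [refl]
  have e1 : ∀ w, Wt w (p ∘ refl) = Wt (w ∘ refl) p := by
    intro w
    unfold Wt
    refine (Equiv.sum_comp refl _).symm.trans ?_
    simp [hinv]
  rw [e1, e1]
  constructor
  · unfold Wt
    rw [← Finset.sum_add_distrib]
    refine Finset.sum_congr rfl fun v _ => ?_
    by_cases hv : v.1.val = 0
    · simp [hz v hv]
    · have := v.1.isLt
      simp only [wt, wb, Function.comp, hneg v hv]
      rw [show n - (n - v.1.val) = v.1.val by omega]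
      ring
  · unfold Wt
    refine Finset.sum_congr rfl fun v _ => ?_
    by_cases hv : v.1.val = 0
    · simp [hz v hv]
    · have := v.1.isLt
      simp only [wt, Function.comp, hneg v hv]
      rw [show n - (n - v.1.val) = v.1.val by omega]
      ring

lemma small_case (hn : 5 ≤ n) (p : Fin n × Fin 2 → ℕ) (hs : Solvable (prism n) p)
    (hp : 3 * ∑ v, p v < 2 * n) : optRub (ladder (n - 2)) ≤ ∑ v, p v := by
  have main : ∀ q : Fin n × Fin 2 → ℕ, Solvable (prism n) q → ∑ v, q v = ∑ v, p v →
      Phase hn q q → optRub (ladder (n - 2)) ≤ ∑ v, p v := by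
    intro q h1 h2 h3
    refine Nat.sInf_le ⟨_, h3.solvable h1, ?_⟩
    rw [sum_push, h2]
  obtain ⟨c, hc⟩ := exists_rot p hp
  have s1 := solvable_iso (rot c) (rot_adj c) hs
  have t1 : ∑ v, (p ∘ rot c) v = ∑ v, p v := Equiv.sum_comp (rot c) p
  by_cases hB : Z (p ∘ rot c) → Wt (wb n) (p ∘ rot c) < 2 ^ n
  · exact main _ s1 t1 (Phase.begins hc hB)
  · push Not at hB
    obtain ⟨hz, hB⟩ := hB
    obtain ⟨h1, h2⟩ := Wt_refl _ hz
    refine main _ (solvable_iso refl refl_adj s1) ((Equiv.sum_comp refl _).trans t1)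
      (Phase.begins (by omega) (fun _ => by omega))

end rotation

section ladderub

lemma reach1 {V : Type*} [DecidableEq V] {G : SimpleGraph V} {p : V → ℕ} {u : V} (h : 1 ≤ p u) :
    KReachable G p u 1 := Dom.reach (Dom.refl G p) h

lemma reach2 {V : Type*} [DecidableEq V] {G : SimpleGraph V} {p : V → ℕ} {a b u : V}
    (hab : a ≠ b) (ha : 1 ≤ p a) (hb : 1 ≤ p b) (h1 : G.Adj a u) (h2 : G.Adj b u) :
    KReachable G p u 1 := by
  have h : Dom G p (0 + e a + e b) := by
    refine (Dom.refl G p).mono ?_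
    intro x
    simp only [Pi.add_apply, e_apply, Pi.zero_apply]
    split_ifs <;> simp_all
  exact (h.move h1 h2).reach (by simp)

lemma reach3 {V : Type*} [DecidableEq V] {G : SimpleGraph V} {p : V → ℕ} {a b c d u : V}
    (hab : a ≠ b) (hac : a ≠ c) (hbc : b ≠ c) (ha : 1 ≤ p a) (hb : 1 ≤ p b) (hc : 1 ≤ p c)
    (h1 : G.Adj a d) (h2 : G.Adj b d) (h3 : G.Adj c u) (h4 : G.Adj d u) :
    KReachable G p u 1 := by
  have h : Dom G p (e c + e a + e b) := by
    refine (Dom.refl G p).mono ?_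
    intro x
    simp only [Pi.add_apply, e_apply]
    split_ifs <;> simp_all
  have h' := h.move h1 h2
  rw [← zero_add (e c)] at h'
  exact (h'.move h3 h4).reach (by simp)

/-- the explicit ladder distribution -/
def lad (m : ℕ) (v : Fin m × Fin 2) : ℕ :=
  if (v.2.val = 0 ∧ (v.1.val % 3 = 0 ∨ (v.1.val + 1 = m ∧ m % 3 = 0))) ∨
    (v.2.val = 1 ∧ (v.1.val % 3 = 1 ∨ (v.1.val + 1 = m ∧ m % 3 = 1))) then 1 else 0

lemma ladder_adj_iff {m : ℕ} {v u : Fin m × Fin 2} : (ladder m).Adj v u ↔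
    (v.2.val = u.2.val ∧ (v.1.val + 1 = u.1.val ∨ u.1.val + 1 = v.1.val)) ∨
    (v.1.val = u.1.val ∧ v.2.val + u.2.val = 1) := by
  unfold ladder
  rw [boxProd_adj, pathGraph_adj, pathGraph_adj]
  have h3 := v.2.isLt
  have h4 := u.2.isLt
  simp only [Fin.ext_iff]
  omega

lemma lad_pos {m : ℕ} {v : Fin m × Fin 2} (h : (v.2.val = 0 ∧ (v.1.val % 3 = 0 ∨
    (v.1.val + 1 = m ∧ m % 3 = 0))) ∨
    (v.2.val = 1 ∧ (v.1.val % 3 = 1 ∨ (v.1.val + 1 = m ∧ m % 3 = 1)))) : 1 ≤ lad m v := by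
  unfold lad; rw [if_pos h]

lemma lad_solvable {m : ℕ} (hm : 3 ≤ m) : Solvable (ladder m) (lad m) := by
  rintro ⟨⟨i, hi⟩, ⟨s, hs⟩⟩
  have T : ∀ j (hj : j < m), j % 3 = 0 ∨ (j + 1 = m ∧ m % 3 = 0) →
      1 ≤ lad m (⟨j, hj⟩, 0) := fun j hj h => lad_pos (Or.inl ⟨rfl, h⟩)
  have B : ∀ j (hj : j < m), j % 3 = 1 ∨ (j + 1 = m ∧ m % 3 = 1) →
      1 ≤ lad m (⟨j, hj⟩, 1) := fun j hj h => lad_pos (Or.inr ⟨rfl, h⟩)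
  have hs' : s = 0 ∨ s = 1 := by omega
  have h3 : i % 3 = 0 ∨ i % 3 = 1 ∨ i % 3 = 2 := by omega
  have i1 : i - 1 < m := by omega
  have i2 : i - 2 < m := by omega
  rcases hs' with rfl | rfl
  · rcases h3 with h | h | h
    · exact reach1 (T i hi (Or.inl h))
    · refine reach2 (a := (⟨i, hi⟩, 1)) (b := (⟨i - 1, i1⟩, 0)) (by simp)
        (B i hi (by omega)) (T (i - 1) i1 (by omega)) ?_ ?_ <;> rw [ladder_adj_iff] <;> simp <;>
        omega
    · by_cases hl : i + 1 = m
      · exact reach1 (T i hi (Or.inr (by omega)))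
      · have i3 : i + 1 < m := by omega
        refine reach3 (a := (⟨i - 2, i2⟩, 0)) (b := (⟨i - 1, i1⟩, 1))
          (c := (⟨i + 1, i3⟩, 0)) (d := (⟨i - 1, i1⟩, 0)) (by simp)
          (by simp; omega) (by simp) (T (i - 2) i2 (by omega)) (B (i - 1) i1 (by omega))
          (T (i + 1) i3 (by omega))
          ?_ ?_ ?_ ?_ <;> rw [ladder_adj_iff] <;> simp <;> omega
  · rcases h3 with h | h | h
    · by_cases hl : i + 1 = m
      · exact reach1 (B i hi (Or.inr (by omega)))
      · have i3 : i + 1 < m := by omega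
        refine reach2 (a := (⟨i, hi⟩, 0)) (b := (⟨i + 1, i3⟩, 1)) (by simp)
          (T i hi (by omega)) (B (i + 1) i3 (by omega)) ?_ ?_ <;> rw [ladder_adj_iff] <;> simp
    · exact reach1 (B i hi (Or.inl h))
    · by_cases hl : i + 1 = m
      · refine reach2 (a := (⟨i, hi⟩, 0)) (b := (⟨i - 1, i1⟩, 1)) (by simp)
          (T i hi (by omega)) (B (i - 1) i1 (by omega)) ?_ ?_ <;> rw [ladder_adj_iff] <;> simp <;>
          omega
      · have i3 : i + 1 < m := by omega
        by_cases hl2 : i + 2 = m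
        · refine reach2 (a := (⟨i + 1, i3⟩, 1)) (b := (⟨i - 1, i1⟩, 1))
            (by simp; omega) (B (i + 1) i3 (by omega)) (B (i - 1) i1 (by omega)) ?_ ?_ <;>
            rw [ladder_adj_iff] <;> simp <;> omega
        · have i4 : i + 2 < m := by omega
          refine reach3 (a := (⟨i + 1, i3⟩, 0)) (b := (⟨i + 2, i4⟩, 1))
            (c := (⟨i - 1, i1⟩, 1)) (d := (⟨i + 1, i3⟩, 1)) (by simp)
            (by simp) (by simp; omega) (T (i + 1) i3 (by omega)) (B (i + 2) i4 (by omega))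
            (B (i - 1) i1 (by omega))
            ?_ ?_ ?_ ?_ <;> rw [ladder_adj_iff] <;> simp <;> omega

lemma lad_sum {m : ℕ} (hm : 3 ≤ m) : 3 * ∑ v, lad m v ≤ 2 * m + 4 := by
  have h1 : ∀ k : ℕ, ∑ i ∈ Finset.range k, (if i % 3 = 2 then 0 else 1) = 2 * (k / 3) + k % 3 := by
    intro k
    induction k with
    | zero => simp
    | succ k ih =>
      rw [Finset.sum_range_succ, ih]
      split_ifs <;> omega
  have h2 : ∑ v, lad m v ≤ ∑ i ∈ Finset.range m, ((if i % 3 = 2 then 0 else 1) +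
      (if i = m - 1 then (if m % 3 = 2 then 0 else 1) else 0)) := by
    rw [Fintype.sum_prod_type,
      ← Fin.sum_univ_eq_sum_range (fun i => (if i % 3 = 2 then 0 else 1) +
        (if i = m - 1 then (if m % 3 = 2 then 0 else 1) else 0)) m]
    refine Finset.sum_le_sum fun i _ => ?_
    rw [Fin.sum_univ_two]
    have hi := i.isLt
    simp only [lad, Fin.val_zero, Fin.val_one, true_and, zero_ne_one, one_ne_zero, false_and, or_false, false_or]
    split_ifs <;> omega
  rw [Finset.sum_add_distrib, h1, Finset.sum_ite_eq' (Finset.range m),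
    if_pos (by simp; omega)] at h2
  split_ifs at h2 <;> omega

end ladderub

end PrismLB

/-- Lower bound: for `n ≥ 5` the optimal rubbling number of the `n`-prism is at least
that of the ladder `P_{n-2} □ P_2`. -/
theorem prism_lower_bound (n : ℕ) (hn : 5 ≤ n) :
    optRub (ladder (n - 2)) ≤ optRub (prism n) := by
  have : NeZero n := ⟨by omega⟩
  have hne : {m | ∃ p : Fin n × Fin 2 → ℕ, Solvable (prism n) p ∧ ∑ v, p v = m}.Nonempty :=
    ⟨_, fun _ => 1, fun u => PrismLB.reach1 le_rfl, rfl⟩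
  obtain ⟨p, hp, hsum⟩ := Nat.sInf_mem hne
  have hopt : optRub (prism n) = ∑ v, p v := hsum.symm
  rw [hopt]
  by_cases h : 3 * ∑ v, p v < 2 * n
  · exact PrismLB.small_case hn p hp h
  · have h1 : optRub (ladder (n - 2)) ≤ ∑ v, PrismLB.lad (n - 2) v :=
      Nat.sInf_le ⟨_, PrismLB.lad_solvable (by omega), rfl⟩
    have h2 := PrismLB.lad_sum (m := n - 2) (by omega)
    omega
end

section
/- The optimal rubbling numbers of the n-prisms are: for every k ≥ 2, ρ_opt(C_{3k−1}□P_2) = 2k and ρ_opt(C_{3k}□P_2) = 2k; for every k ≥ 1, ρ_opt(C_{3k+1}□P_2) = 2k + 1; and in the exceptional smallest case ρ_opt(C_3□P_2) = 3. -/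
open SimpleGraph

namespace Rub

/-! ### One-dimensional invariant (lower bound) -/

section Inv
set_option linter.unusedSectionVars false
set_option linter.unusedVariables false
variable {ι : Type*} [AddCommGroup ι] [DecidableEq ι]

/-- Certificate that vertex `j` of the cycle cannot get two pebbles from `f`. -/
def Inv (e : ι) (j : ι) (f : ι → ℕ) : Prop :=
  ∃ A A' : ι → ℕ, (∀ i, f i + A (i - e) / 2 ≤ A i) ∧ (∀ i, f i + A' (i + e) / 2 ≤ A' i) ∧
    f j + (A (j - e) + A' (j + e)) / 2 ≤ 1

theorem Inv.neg {e j : ι} {f : ι → ℕ} (h : Inv e j f) : Inv (-e) j f := by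
  obtain ⟨A, A', h1, h2, h3⟩ := h
  refine ⟨A', A, ?_, ?_, ?_⟩
  · simpa using h2
  · simpa [← sub_eq_add_neg] using h1
  · simpa [← sub_eq_add_neg, add_comm] using h3

theorem Inv.mono {e j : ι} {f f' : ι → ℕ} (h : Inv e j f) (hf : ∀ i, f' i ≤ f i) : Inv e j f' := by
  obtain ⟨A, A', h1, h2, h3⟩ := h
  exact ⟨A, A', fun i => by have := h1 i; have := hf i; omega,
    fun i => by have := h2 i; have := hf i; omega, by have := hf j; omega⟩

theorem Inv.right {e j : ι} (he : e ≠ 0) (he2 : e + e ≠ 0) {f f' : ι → ℕ} (h : Inv e j f)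
    (c : ℕ) (u : ι) (hv : f' (u - e) + 2 * c ≤ f (u - e)) (hu : f' u ≤ f u + c)
    (ho : ∀ i, i ≠ u → f' i ≤ f i) : Inv e j f' := by
  obtain ⟨A, A', h1, h2, h3⟩ := h
  have hle : ∀ i, i ≠ u → f' i ≤ f i := ho
  have huv : u - e ≠ u := by simpa using he
  have hue : u + e ≠ u := by simpa using he
  have key1 : ∀ i, (if i = u - e then A i - 2 * c else A i) ≤ A i := by
    intro i; split_ifs <;> omega
  have hAv := h1 (u - e)
  refine ⟨fun i => if i = u - e then A i - 2 * c else A i,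
    fun i => if i = u then A' i + c else A' i, ?_, ?_, ?_⟩
  · intro i
    have a1 := h1 i
    have a2 := key1 (i - e)
    by_cases hiu : i = u
    · subst hiu
      simp only [if_true, if_neg huv.symm]
      omega
    · have a3 := ho i hiu
      by_cases hiv : i = u - e
      · subst hiv
        simp only [if_true] at a2 ⊢
        omega
      · simp only [if_neg hiv]
        omega
  · intro i
    have a1 := h2 i
    by_cases hiu : i = u
    · subst hiu
      simp only [if_true, if_neg hue]
      omega
    · have a3 := ho i hiu
      by_cases hiv : i = u - e
      · subst hiv
        simp only [sub_add_cancel, if_true, if_neg huv] at a1 ⊢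
        omega
      · have : i + e ≠ u := fun h => hiv (by rw [← h]; simp)
        simp only [if_neg hiu, if_neg this]
        omega
  · have a2 := key1 (j - e)
    by_cases hiu : j = u
    · subst hiu
      simp only [if_true, if_neg hue]
      omega
    · have a3 := ho j hiu
      by_cases hiv : j = u - e
      · subst hiv
        simp only [sub_add_cancel, if_true] at a2 h3 ⊢
        omega
      · have : j + e ≠ u := fun h => hiv (by rw [← h]; simp)
        simp only [if_neg this]
        omega

theorem Inv.left {e j : ι} (he : e ≠ 0) (he2 : e + e ≠ 0) {f f' : ι → ℕ} (h : Inv e j f)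
    (c : ℕ) (u : ι) (hv : f' (u + e) + 2 * c ≤ f (u + e)) (hu : f' u ≤ f u + c)
    (ho : ∀ i, i ≠ u → f' i ≤ f i) : Inv e j f' := by
  have h' := h.neg
  have := Inv.right (e := -e) (j := j) (by simpa using he)
    (by rw [← neg_add]; exact neg_ne_zero.2 he2) h' c u (by simpa using hv) hu ho
  simpa using this.neg

/-- Half of the strict move. -/
theorem strict_aux {e : ι} (he : e ≠ 0) (he2 : e + e ≠ 0) {f f' A : ι → ℕ}
    (h1 : ∀ i, f i + A (i - e) / 2 ≤ A i)
    (c : ℕ) (u : ι) (hv : f' (u - e) + c ≤ f (u - e)) (hw : f' (u + e) + c ≤ f (u + e))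
    (hu : f' u ≤ f u + c) (ho : ∀ i, i ≠ u → f' i ≤ f i) (i : ι) :
    f' i + (if i - e = u - e then A (i - e) - c else if i - e = u then A (i - e) + c
      else A (i - e)) / 2 ≤ (if i = u - e then A i - c else if i = u then A i + c else A i) := by
  have huv : u - e ≠ u := by simpa using he
  have hue : u + e ≠ u := by simpa using he
  have hwv : u + e ≠ u - e := by
    intro h; apply he2
    have : u + e - (u - e) = 0 := sub_eq_zero.2 h
    rw [← this]; abel
  have a1 := h1 i
  have hAv := h1 (u - e)
  by_cases hiu : i = u
  · subst hiu
    simp only [if_true, if_neg huv.symm]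
    omega
  · have a3 := ho i hiu
    have b : i - e ≠ u - e := by simpa using hiu
    by_cases hiv : i = u - e
    · have b' : i - e ≠ u := by
        rw [hiv]; intro h; apply he2
        have : u - (u - e - e) = 0 := sub_eq_zero.2 h.symm
        rw [← this]; abel
      rw [if_neg b, if_neg b', if_pos hiv]
      subst hiv
      omega
    · rw [if_neg b, if_neg hiv, if_neg hiu]
      by_cases hiw : i - e = u
      · have hiw' : i = u + e := by rw [← hiw]; simp
        rw [if_pos hiw]
        rw [← hiw'] at hw
        omega
      · rw [if_neg hiw]; omega

theorem Inv.strict {e j : ι} (he : e ≠ 0) (he2 : e + e ≠ 0) {f f' : ι → ℕ} (h : Inv e j f)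
    (c : ℕ) (u : ι) (hv : f' (u - e) + c ≤ f (u - e)) (hw : f' (u + e) + c ≤ f (u + e))
    (hu : f' u ≤ f u + c) (ho : ∀ i, i ≠ u → f' i ≤ f i) : Inv e j f' := by
  obtain ⟨A, A', h1, h2, h3⟩ := h
  have huv : u - e ≠ u := by simpa using he
  have hue : u + e ≠ u := by simpa using he
  have hwv : u + e ≠ u - e := by
    intro h; apply he2
    have : u + e - (u - e) = 0 := sub_eq_zero.2 h
    rw [← this]; abel
  refine ⟨fun i => if i = u - e then A i - c else if i = u then A i + c else A i,
    fun i => if i = u + e then A' i - c else if i = u then A' i + c else A' i,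
    strict_aux he he2 h1 c u hv hw hu ho, ?_, ?_⟩
  · have := strict_aux (e := -e) (f := f) (f' := f') (A := A') (by simpa using he)
      (by rw [← neg_add]; exact neg_ne_zero.2 he2) (by simpa using h2) c u (by simpa using hw)
      (by simpa [← sub_eq_add_neg] using hv) hu ho
    simpa using this
  · have hAv := h1 (u - e)
    have hAw := h2 (u + e)
    by_cases hju : j = u
    · subst hju
      simp only [if_true]
      omega
    · have a3 := ho j hju
      have b1 : j - e ≠ u - e := by simpa using hju
      have b2 : j + e ≠ u + e := by simpa using hju
      simp only [if_neg b1, if_neg b2]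
      by_cases hjv : j - e = u
      · have hj : j = u + e := by rw [← hjv]; simp
        have : j + e ≠ u := by
          rw [← hjv]; intro h; apply he2
          have : (j + e) - (j - e) = 0 := sub_eq_zero.2 h
          rw [← this]; abel
        rw [if_pos hjv, if_neg this]
        rw [← hj] at hw
        omega
      · rw [if_neg hjv]
        by_cases hjw : j + e = u
        · have hj : j = u - e := by rw [← hjw]; simp
          rw [if_pos hjw]
          rw [← hj] at hv
          omega
        · rw [if_neg hjw]; omega

theorem exists_fix [Fintype ι] (e : ι) (f : ι → ℕ) :
    ∃ A : ι → ℕ, ∀ i, A i = f i + A (i - e) / 2 := by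
  obtain ⟨M, hM⟩ : ∃ M, ∀ i, f i ≤ M := ⟨∑ i, f i, fun i =>
    Finset.single_le_sum (fun _ _ => Nat.zero_le _) (Finset.mem_univ i)⟩
  let S : Set (ι → ℕ) := {A | (∀ i, A i ≤ f i + A (i - e) / 2) ∧ ∀ i, A i ≤ 2 * M}
  have hfin : S.Finite := (Set.finite_Iic (fun _ : ι => 2 * M)).subset fun A hA i => hA.2 i
  have hne : S.Nonempty := ⟨fun _ => 0, by simp, by simp⟩
  obtain ⟨A, hA, hmax⟩ := Set.exists_max_image S (fun A => ∑ i, A i) hfin hne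
  refine ⟨A, ?_⟩
  have hA1 := hA.1
  have hA2 := hA.2
  have hB : (fun i => f i + A (i - e) / 2) ∈ S := by
    refine ⟨fun i => ?_, fun i => ?_⟩
    · have := hA1 (i - e)
      have : A (i - e) / 2 ≤ (f (i - e) + A (i - e - e) / 2) / 2 := Nat.div_le_div_right this
      simpa using this
    · have := hA2 (i - e); have := hM i
      simp only
      omega
  have hs := hmax _ hB
  have heq := (Finset.sum_eq_sum_iff_of_le (fun i _ => hA1 i)).1
    (le_antisymm (Finset.sum_le_sum fun i _ => hA1 i) hs)
  exact fun i => heq i (Finset.mem_univ i)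

/-- If fewer than `|ι|` pebbles are used, some vertex has a certificate. -/
theorem exists_inv [Fintype ι] (e : ι) (f : ι → ℕ) (hf : ∑ i, f i < Fintype.card ι) :
    ∃ j, Inv e j f := by
  obtain ⟨A, hA⟩ := exists_fix e f
  obtain ⟨A', hA'⟩ := exists_fix (-e) f
  simp only [sub_neg_eq_add] at hA'
  by_contra hcon
  have hj : ∀ j, 2 ≤ f j + (A (j - e) + A' (j + e)) / 2 := by
    intro j
    by_contra h
    exact hcon ⟨j, A, A', fun i => (hA i).ge, fun i => (hA' i).ge, by omega⟩
  have hpt : ∀ i, (A i - 1) + (A' i - 1) + 2 ≤ 2 * f i + ((A (i - e) - 1) + (A' (i + e) - 1)) := by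
    intro i
    have := hj i; have := hA i; have := hA' i
    omega
  have hsum := Finset.sum_le_sum (s := Finset.univ) fun i _ => hpt i
  simp only [Finset.sum_add_distrib, ← Finset.mul_sum] at hsum
  have e1 : ∑ i, (A (i - e) - 1) = ∑ i, (A i - 1) :=
    Equiv.sum_comp (Equiv.subRight e) (fun i => A i - 1)
  have e2 : ∑ i, (A' (i + e) - 1) = ∑ i, (A' i - 1) :=
    Equiv.sum_comp (Equiv.addRight e) (fun i => A' i - 1)
  rw [e1, e2] at hsum
  simp only [Finset.sum_const, Finset.card_univ, smul_eq_mul] at hsum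
  omega

end Inv

/-! ### From the prism to the cycle -/

theorem prism_adj {m : ℕ} {i j : Fin (m + 3)} {s t : Fin 2} :
    (prism (m + 3)).Adj (i, s) (j, t) ↔
      (s = t ∧ (i = j - 1 ∨ i = j + 1)) ∨ (i = j ∧ s ≠ t) := by
  have h1 : (pathGraph 2).Adj s t ↔ s ≠ t := by
    rw [pathGraph_two_eq_top]; simp
  have h2 : (cycleGraph (m + 3)).Adj i j ↔ (i = j - 1 ∨ i = j + 1) := by
    rw [cycleGraph_adj (n := m + 1), sub_eq_iff_eq_add', sub_eq_iff_eq_add', or_comm,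
      eq_sub_iff_add_eq, eq_comm]
  rw [prism, boxProd_adj, h1, h2]
  simp only
  tauto

/-- Weighted column counts: a pebble in row `s` counts twice. -/
def wt {n : ℕ} (s : Fin 2) (q : Fin n × Fin 2 → ℕ) (i : Fin n) : ℕ :=
  q (i, s) + q (i, 0) + q (i, 1)

theorem step_form {V : Type*} [DecidableEq V] {G : SimpleGraph V} {q q' : V → ℕ}
    (h : RubblingStep G q q') : ∃ v w u, G.Adj v u ∧ G.Adj w u ∧
      ∀ x, q' x + (if x = v then 1 else 0) + (if x = w then 1 else 0)
        ≤ q x + (if x = u then 1 else 0) := by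
  rcases h with ⟨v, u, ha, h2, rfl⟩ | ⟨v, w, u, hvw, hv, hw, h1, h1', rfl⟩
  · refine ⟨v, v, u, ha, ha, fun x => ?_⟩
    have := ha.ne
    by_cases hx : x = v
    · subst hx; simp; omega
    · simp only [if_neg hx]; split_ifs <;> omega
  · refine ⟨v, w, u, hv, hw, fun x => ?_⟩
    have := hv.ne
    have := hw.ne
    by_cases hx : x = v
    · subst hx; simp [hvw]; omega
    · by_cases hx' : x = w
      · subst hx'; simp [hx]; omega
      · simp only [if_neg hx, if_neg hx']; split_ifs <;> omega

theorem wt_pt {n : ℕ} (s t : Fin 2) (i a : Fin n) :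
    (if (i, s) = (a, t) then 1 else 0) + (if (i, (0 : Fin 2)) = (a, t) then 1 else 0)
      + (if (i, (1 : Fin 2)) = (a, t) then 1 else 0)
      = (if i = a then (if t = s then 2 else 1) else 0 : ℕ) := by
  by_cases h : i = a
  · subst h
    revert s t
    simp only [Prod.mk.injEq, true_and]
    decide
  · simp [h]

theorem wt_form {n : ℕ} {q q' : Fin n × Fin 2 → ℕ} {a b k : Fin n} {tv tw t : Fin 2}
    (h : ∀ x, q' x + (if x = (a, tv) then 1 else 0) + (if x = (b, tw) then 1 else 0)
        ≤ q x + (if x = (k, t) then 1 else 0)) (s : Fin 2) (i : Fin n) :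
    wt s q' i + (if i = a then (if tv = s then 2 else 1) else 0)
      + (if i = b then (if tw = s then 2 else 1) else 0)
      ≤ wt s q i + (if i = k then (if t = s then 2 else 1) else 0) := by
  have h0 := h (i, 0)
  have h1 := h (i, 1)
  have hs := h (i, s)
  rw [← wt_pt, ← wt_pt, ← wt_pt]
  unfold wt
  linarith

theorem inv_step {m : ℕ} {q q' : Fin (m + 3) × Fin 2 → ℕ}
    (h : RubblingStep (prism (m + 3)) q q') (s : Fin 2) (j : Fin (m + 3))
    (hi : Inv 1 j (wt s q)) : Inv 1 j (wt s q') := by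
  obtain ⟨⟨a, tv⟩, ⟨b, tw⟩, ⟨k, t⟩, hv, hw, hx⟩ := step_form h
  have H := wt_form hx s
  have he : (1 : Fin (m + 3)) ≠ 0 := by simp
  have he2 : (1 : Fin (m + 3)) + 1 ≠ 0 := by
    intro h
    have := congrArg Fin.val h
    simp [Fin.val_add] at this
    rw [Nat.mod_eq_of_lt (by omega)] at this
    omega
  have n1 : k - 1 ≠ k := by simp
  have n2 : k + 1 ≠ k := by simp
  have n3 : k + 1 ≠ k - 1 := by
    intro h; apply he2
    have : k + 1 - (k - 1) = 0 := sub_eq_zero.2 h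
    rw [← this]; abel
  have Hu := H k
  have H1 := H (k - 1)
  have H2 := H (k + 1)
  have Ho : ∀ i, i ≠ k → wt s q' i ≤ wt s q i := by
    intro i hik
    have := H i
    rw [if_neg hik] at this
    omega
  have Hd : wt s q' k ≤ wt s q k → Inv 1 j (wt s q') := fun hk => hi.mono fun i => by
    by_cases hik : i = k
    · rw [hik]; exact hk
    · exact Ho i hik
  rw [prism_adj] at hv hw
  set c := (if t = s then 2 else 1 : ℕ) with hc
  have hc12 : c = 1 ∨ c = 2 := by rw [hc]; split_ifs <;> simp
  have hop : ∀ t', t' ≠ t → (if t' = s then 2 else 1 : ℕ) = 3 - c := by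
    intro t' ht'
    rw [hc]
    revert ht'
    fin_cases t' <;> fin_cases t <;> fin_cases s <;> simp
  rcases hv with ⟨rfl, hv⟩ | ⟨rfl, hv⟩
  · rcases hw with ⟨rfl, hw⟩ | ⟨rfl, hw⟩
    · rw [← hc] at Hu H1 H2
      rcases hv with rfl | rfl <;> rcases hw with rfl | rfl <;>
        simp only [if_true, if_neg n1, if_neg n2, if_neg n3, if_neg n1.symm, if_neg n2.symm,
          if_neg n3.symm] at Hu H1 H2
      · exact hi.right he he2 c k (by omega) (by omega) Ho
      · exact hi.strict he he2 c k (by omega) (by omega) (by omega) Ho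
      · exact hi.strict he he2 c k (by omega) (by omega) (by omega) Ho
      · exact hi.left he he2 c k (by omega) (by omega) Ho
    · have := hop _ hw
      rw [← hc, this] at Hu H1 H2
      rcases hv with rfl | rfl <;>
        simp only [if_true, if_neg n1, if_neg n2, if_neg n3, if_neg n1.symm, if_neg n2.symm,
          if_neg n3.symm] at Hu H1 H2
      · rcases hc12 with h | h
        · exact Hd (by omega)
        · exact hi.right he he2 1 _ (by omega) (by omega) Ho
      · rcases hc12 with h | h
        · exact Hd (by omega)
        · exact hi.left he he2 1 _ (by omega) (by omega) Ho
  · have e1 := hop _ hv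
    rcases hw with ⟨rfl, hw⟩ | ⟨rfl, hw⟩
    · rw [← hc, e1] at Hu H1 H2
      rcases hw with rfl | rfl <;>
        simp only [if_true, if_neg n1, if_neg n2, if_neg n3, if_neg n1.symm, if_neg n2.symm,
          if_neg n3.symm] at Hu H1 H2
      · rcases hc12 with h | h
        · exact Hd (by omega)
        · exact hi.right he he2 1 _ (by omega) (by omega) Ho
      · rcases hc12 with h | h
        · exact Hd (by omega)
        · exact hi.left he he2 1 _ (by omega) (by omega) Ho
    · rw [e1, hop _ hw] at Hu
      simp only [if_true] at Hu
      exact Hd (by omega)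

theorem inv_reach {m : ℕ} {q q' : Fin (m + 3) × Fin 2 → ℕ}
    (h : RubblingReach (prism (m + 3)) q q') (s : Fin 2) (j : Fin (m + 3))
    (hi : Inv 1 j (wt s q)) : Inv 1 j (wt s q') := by
  induction h with
  | refl => exact hi
  | tail _ hs ih => exact inv_step hs s j ih

theorem wt_lower {m : ℕ} {p : Fin (m + 3) × Fin 2 → ℕ} (h : Solvable (prism (m + 3)) p)
    (s : Fin 2) : m + 3 ≤ ∑ i, wt s p i := by
  by_contra hlt
  obtain ⟨j, hj⟩ := exists_inv (1 : Fin (m + 3)) (wt s p) (by simpa using hlt)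
  obtain ⟨q, hq, h1⟩ := h (j, s)
  obtain ⟨A, A', -, -, h3⟩ := inv_reach hq s j hj
  have : 2 ≤ wt s q j := by
    unfold wt
    fin_cases s <;> simp at h1 ⊢ <;> omega
  omega

theorem sum_split {n : ℕ} (p : Fin n × Fin 2 → ℕ) :
    ∑ v, p v = ∑ i, p (i, 0) + ∑ i, p (i, 1) := by
  rw [Fintype.sum_prod_type, ← Finset.sum_add_distrib]
  simp

theorem lower {m : ℕ} {p : Fin (m + 3) × Fin 2 → ℕ} (h : Solvable (prism (m + 3)) p) :
    2 * (m + 3) ≤ 3 * ∑ v, p v := by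
  have h0 := wt_lower h 0
  have h1 := wt_lower h 1
  simp only [wt, Finset.sum_add_distrib] at h0 h1
  rw [sum_split]
  omega

/-! ### Constructions -/

section Constr
variable {V : Type*} [DecidableEq V] {G : SimpleGraph V}

/-- One pebble at `v`. -/
def pt (v : V) : V → ℕ := fun x => if x = v then 1 else 0

theorem step_pt (r : V → ℕ) {v w u : V} (hv : G.Adj v u) (hw : G.Adj w u) :
    RubblingStep G (r + pt v + pt w) (r + pt u) := by
  have n1 := hv.ne
  have n2 := hw.ne
  by_cases hvw : v = w
  · subst hvw
    refine Or.inl ⟨v, u, hv, by simp [pt], ?_⟩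
    funext x
    by_cases hx : x = v
    · subst hx; simp [pt, n1]
    · simp [pt, hx]; split_ifs <;> omega
  · refine Or.inr ⟨v, w, u, hvw, hv, hw, by simp [pt, hvw], by simp [pt], ?_⟩
    funext x
    by_cases hx : x = v
    · subst hx; simp [pt, n1, hvw]
    · by_cases hx' : x = w
      · subst hx'; simp [pt, n2, hx]
      · simp [pt, hx, hx']; split_ifs <;> omega

theorem k0 {p : V → ℕ} {u : V} (h : 1 ≤ p u) : KReachable G p u 1 :=
  ⟨p, Relation.ReflTransGen.refl, h⟩

theorem k1 {p : V → ℕ} {v w u : V} (hv : G.Adj v u) (hw : G.Adj w u)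
    (h : pt v + pt w ≤ p) : KReachable G p u 1 := by
  obtain ⟨r, rfl⟩ := exists_add_of_le h
  refine ⟨r + pt u, Relation.ReflTransGen.single ?_, by simp [pt]⟩
  have := step_pt r hv hw
  rwa [show pt v + pt w + r = r + pt v + pt w by abel]

theorem k2 {p : V → ℕ} {x y w v u : V} (hx : G.Adj x w) (hy : G.Adj y w) (hv : G.Adj v u)
    (hw : G.Adj w u) (h : pt x + pt y + pt v ≤ p) : KReachable G p u 1 := by
  obtain ⟨r, rfl⟩ := exists_add_of_le h
  have s1 := step_pt (r + pt v) hx hy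
  have s2 := step_pt r hv hw
  refine ⟨r + pt u, (Relation.ReflTransGen.single s2).head ?_, by simp [pt]⟩
  rwa [show pt x + pt y + pt v + r = r + pt v + pt x + pt y by abel]

theorem k3 {p : V → ℕ} {x y w x' y' v u : V} (hx : G.Adj x w) (hy : G.Adj y w)
    (hx' : G.Adj x' v) (hy' : G.Adj y' v) (hv : G.Adj v u)
    (hw : G.Adj w u) (h : pt x + pt y + pt x' + pt y' ≤ p) : KReachable G p u 1 := by
  obtain ⟨r, rfl⟩ := exists_add_of_le h
  have s1 := step_pt (r + pt x + pt y) hx' hy'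
  have s2 := step_pt (r + pt v) hx hy
  have s3 := step_pt r hv hw
  refine ⟨r + pt u, ((Relation.ReflTransGen.single s3).head s2).head ?_, by simp [pt]⟩
  rw [show r + pt v + pt x + pt y = r + pt x + pt y + pt v by abel]
  rwa [show pt x + pt y + pt x' + pt y' + r = r + pt x + pt y + pt x' + pt y' by abel]

end Constr

section Le
variable {V : Type*} [DecidableEq V]

theorem le2 {p : V → ℕ} {x y : V} (hx : 1 ≤ p x) (hy : 1 ≤ p y) (h : x ≠ y) :
    pt x + pt y ≤ p := by
  intro z
  simp only [pt, Pi.add_apply]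
  by_cases h1 : z = x
  · subst h1; simp [h, hx]
  · by_cases h2 : z = y
    · subst h2; simp [h1, hy]
    · simp [h1, h2]

theorem le_add {p g : V → ℕ} {x : V} (hg : g ≤ p) (hx : 1 ≤ p x) (h : g x = 0) :
    g + pt x ≤ p := by
  intro z
  simp only [pt, Pi.add_apply]
  by_cases h1 : z = x
  · subst h1; simp [h, hx]
  · simpa [h1] using hg z

theorem pt_ne {x y : V} (h : x ≠ y) : pt y x = 0 := by simp [pt, h]

theorem le3 {p : V → ℕ} {x y z : V} (hx : 1 ≤ p x) (hy : 1 ≤ p y) (hz : 1 ≤ p z) (h : x ≠ y)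
    (h1 : z ≠ x) (h2 : z ≠ y) : pt x + pt y + pt z ≤ p :=
  le_add (le2 hx hy h) hz (by simp [pt_ne h1, pt_ne h2])

theorem le4 {p : V → ℕ} {x y z w : V} (hx : 1 ≤ p x) (hy : 1 ≤ p y) (hz : 1 ≤ p z) (hw : 1 ≤ p w)
    (h : x ≠ y) (h1 : z ≠ x) (h2 : z ≠ y) (h3 : w ≠ x) (h4 : w ≠ y) (h5 : w ≠ z) :
    pt x + pt y + pt z + pt w ≤ p :=
  le_add (le3 hx hy hz h h1 h2) hw (by simp [pt_ne h3, pt_ne h4, pt_ne h5])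

end Le

theorem adj_v {n k : ℕ} (hk : k < n) {s t : Fin 2} (h : s ≠ t) :
    (prism n).Adj (⟨k, hk⟩, s) (⟨k, hk⟩, t) := by
  rw [prism, boxProd_adj, pathGraph_two_eq_top]
  exact Or.inr ⟨h, rfl⟩

theorem adj_h {n k l : ℕ} (hn : 3 ≤ n) (hk : k < n) (hl : l < n) {s : Fin 2}
    (h : k + 1 = l ∨ (k + 1 = n ∧ l = 0)) :
    (prism n).Adj (⟨k, hk⟩, s) (⟨l, hl⟩, s) := by
  rw [prism, boxProd_adj]
  refine Or.inl ⟨?_, rfl⟩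
  rw [cycleGraph_adj']
  right
  simp only [Fin.sub_def]
  rcases h with rfl | ⟨h, rfl⟩
  · rw [show n - k + (k + 1) = 1 + n by omega, Nat.add_mod_right, Nat.mod_eq_of_lt (by omega)]
  · rw [show n - k + 0 = 1 by omega, Nat.mod_eq_of_lt (by omega)]

/-- The optimal distribution on the `n`-prism for `n ≥ 5`. -/
def dist (n : ℕ) (v : Fin n × Fin 2) : ℕ :=
  if (v.1.val % 3 = 0 ∧ v.1.val + 1 < n ∧ v.2 = 0) ∨ (v.1.val % 3 = 1 ∧ v.2 = 1) ∨
    (v.1.val % 3 = 0 ∧ v.1.val + 1 = n ∧ v.2 = 1) then 1 else 0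

theorem dist_sum (n : ℕ) : ∑ v, dist n v = (2 * n + 2) / 3 := by
  have h1 : ∑ v, dist n v = ∑ i : Fin n, (if i.val % 3 = 2 then 0 else 1) := by
    rw [Fintype.sum_prod_type]
    refine Finset.sum_congr rfl fun i _ => ?_
    have := i.isLt
    simp only [Fin.sum_univ_two, dist]
    simp
    split_ifs <;> omega
  rw [h1, Fin.sum_univ_eq_sum_range (fun i => if i % 3 = 2 then 0 else 1)]
  clear h1
  induction n with
  | zero => simp
  | succ n ih =>
    rw [Finset.sum_range_succ, ih]
    have h : n % 3 = 0 ∨ n % 3 = 1 ∨ n % 3 = 2 := by omega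
    have hd := Nat.div_add_mod n 3
    rcases h with h | h | h <;> rw [h] at hd ⊢ <;> rw [← hd] <;> simp <;> omega

theorem dT {n k : ℕ} (hk : k < n) (h : k % 3 = 0) (h' : k + 1 < n) : 1 ≤ dist n (⟨k, hk⟩, 0) := by
  simp [dist, h, h']

theorem dB {n k : ℕ} (hk : k < n) (h : k % 3 = 1) : 1 ≤ dist n (⟨k, hk⟩, 1) := by
  simp [dist, h]

theorem dL {n k : ℕ} (hk : k < n) (h : k % 3 = 0) (h' : k + 1 = n) :
    1 ≤ dist n (⟨k, hk⟩, 1) := by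
  simp [dist, h, h']

theorem nec {n k l : ℕ} {hk : k < n} {hl : l < n} {s t : Fin 2} (h : k ≠ l) :
    ((⟨k, hk⟩, s) : Fin n × Fin 2) ≠ (⟨l, hl⟩, t) := by
  simp [h]

theorem ner {n k l : ℕ} {hk : k < n} {hl : l < n} {s t : Fin 2} (h : s ≠ t) :
    ((⟨k, hk⟩, s) : Fin n × Fin 2) ≠ (⟨l, hl⟩, t) := by
  simp [h]

theorem dist_solvable {n : ℕ} (hn : 5 ≤ n) : Solvable (prism n) (dist n) := by
  have hn3 : 3 ≤ n := by omega
  have t01 : (0 : Fin 2) ≠ 1 := by decide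
  have t10 : (1 : Fin 2) ≠ 0 := by decide
  rintro ⟨⟨k, hk⟩, s⟩
  have hs : s = 0 ∨ s = 1 := by fin_cases s <;> simp
  have h3 : k % 3 = 0 ∨ k % 3 = 1 ∨ k % 3 = 2 := by omega
  have z0 : 0 < n := by omega
  have z1 : 1 < n := by omega
  rcases h3 with h3 | h3 | h3
  · by_cases hl : k + 1 = n
    · rcases hs with rfl | rfl
      · exact k1 (v := (⟨k, hk⟩, 1)) (w := (⟨0, z0⟩, 0)) (adj_v hk t10)
          (adj_h hn3 hk z0 (by omega)).symm
          (le2 (dL hk h3 hl) (dT z0 rfl (by omega)) (ner t10))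
      · exact k0 (dL hk h3 hl)
    · have hk1 : k + 1 < n := by omega
      rcases hs with rfl | rfl
      · exact k0 (dT hk h3 hk1)
      · exact k1 (v := (⟨k, hk⟩, 0)) (w := (⟨k + 1, hk1⟩, 1)) (adj_v hk t01)
          (adj_h hn3 hk hk1 (by omega)).symm
          (le2 (dT hk h3 hk1) (dB hk1 (by omega)) (ner t01))
  · rcases hs with rfl | rfl
    · have hk1 : k - 1 < n := by omega
      exact k1 (v := (⟨k, hk⟩, 1)) (w := (⟨k - 1, hk1⟩, 0)) (adj_v hk t10)
        (adj_h hn3 hk1 hk (by omega))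
        (le2 (dB hk h3) (dT hk1 (by omega) (by omega)) (ner t10))
    · exact k0 (dB hk h3)
  · have hm1 : k - 1 < n := by omega
    have hm2 : k - 2 < n := by omega
    have pm1 := dB hm1 (by omega)
    have pm2 := dT hm2 (by omega) (by omega)
    have am : ∀ s, (prism n).Adj (⟨k - 1, hm1⟩, s) (⟨k, hk⟩, s) := fun s =>
      adj_h hn3 hm1 hk (by omega)
    have am2 : (prism n).Adj (⟨k - 2, hm2⟩, 0) (⟨k - 1, hm1⟩, 0) := adj_h hn3 hm2 hm1 (by omega)
    by_cases hl : k + 1 = n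
    · have a0 : ∀ s, (prism n).Adj (⟨0, z0⟩, s) (⟨k, hk⟩, s) := fun s =>
        (adj_h hn3 hk z0 (by omega)).symm
      have p0 := dT z0 rfl (by omega)
      rcases hs with rfl | rfl
      · exact k2 (adj_v hm1 t10) am2 (a0 0) (am 0)
          (le3 pm1 pm2 p0 (ner t10) (ner t01) (nec (by omega)))
      · exact k2 (w := (⟨0, z0⟩, 1)) (adj_v z0 t01) (adj_h hn3 z0 z1 (by omega)).symm
          (am 1) (a0 1)
          (le3 p0 (dB z1 rfl) pm1 (ner t01) (ner t10) (nec (by omega)))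
    · have hp1 : k + 1 < n := by omega
      have ap : ∀ s, (prism n).Adj (⟨k + 1, hp1⟩, s) (⟨k, hk⟩, s) := fun s =>
        (adj_h hn3 hk hp1 (by omega)).symm
      by_cases hl2 : k + 2 = n
      · have pp1 := dL hp1 (by omega) (by omega)
        have p0 := dT z0 rfl (by omega)
        rcases hs with rfl | rfl
        · exact k3 (adj_v hm1 t10) am2 (adj_v hp1 t10) (adj_h hn3 hp1 z0 (by omega)).symm
            (ap 0) (am 0)
            (le4 pm1 pm2 pp1 p0 (ner t10) (nec (by omega)) (ner t10) (ner t01) (nec (by omega))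
              (ner t01))
        · exact k1 (am 1) (ap 1) (le2 pm1 pp1 (nec (by omega)))
      · have hp2 : k + 2 < n := by omega
        have pp1 := dT hp1 (by omega) (by omega)
        have pp2 := dB hp2 (by omega)
        rcases hs with rfl | rfl
        · exact k2 (adj_v hm1 t10) am2 (ap 0) (am 0)
            (le3 pm1 pm2 pp1 (ner t10) (ner t01) (nec (by omega)))
        · exact k2 (adj_v hp1 t01) (adj_h hn3 hp1 hp2 (by omega)).symm (am 1) (ap 1)
            (le3 pp1 pp2 pm1 (ner t01) (ner t10) (nec (by omega)))

theorem opt_eq {n N : ℕ} (p : Fin n × Fin 2 → ℕ) (hp : Solvable (prism n) p)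
    (hs : ∑ v, p v = N) (hlow : ∀ p, Solvable (prism n) p → N ≤ ∑ v, p v) :
    optRub (prism n) = N := by
  refine le_antisymm (Nat.sInf_le ⟨p, hp, hs⟩) ?_
  refine le_csInf ⟨N, p, hp, hs⟩ ?_
  rintro m ⟨p', hp', rfl⟩
  exact hlow p' hp'

theorem lower' {n : ℕ} (hn : 3 ≤ n) (p : Fin n × Fin 2 → ℕ) (h : Solvable (prism n) p) :
    (2 * n + 2) / 3 ≤ ∑ v, p v := by
  obtain ⟨m, rfl⟩ := Nat.exists_eq_add_of_le' hn
  have := lower h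
  omega

theorem opt_big {n : ℕ} (hn : 5 ≤ n) : optRub (prism n) = (2 * n + 2) / 3 :=
  opt_eq (dist n) (dist_solvable hn) (dist_sum n) (lower' (by omega))

theorem opt_four : optRub (prism 4) = 3 := by
  have t01 : (0 : Fin 2) ≠ 1 := by decide
  have t10 : (1 : Fin 2) ≠ 0 := by decide
  have aT : ∀ i j : Fin 4, ∀ s : Fin 2, (i = j - 1 ∨ i = j + 1) → (prism 4).Adj (i, s) (j, s) :=
    fun i j s h => (prism_adj (m := 1)).2 (Or.inl ⟨rfl, h⟩)
  have aV : ∀ i : Fin 4, ∀ s t : Fin 2, s ≠ t → (prism 4).Adj (i, s) (i, t) :=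
    fun i s t h => (prism_adj (m := 1)).2 (Or.inr ⟨rfl, h⟩)
  refine opt_eq (pt (0, 0) + pt (0, 0) + pt (2, 1)) ?_ (by decide) (lower' (by norm_num))
  have le : pt ((0 : Fin 4), (0 : Fin 2)) + pt (0, 0) ≤ pt (0, 0) + pt (0, 0) + pt (2, 1) :=
    le_self_add
  rintro ⟨i, s⟩
  have hi : i = 0 ∨ i = 1 ∨ i = 2 ∨ i = 3 := by revert i; decide
  have hs : s = 0 ∨ s = 1 := by revert s; decide
  rcases hi with rfl | rfl | rfl | rfl <;> rcases hs with rfl | rfl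
  · exact k0 (by decide)
  · exact k1 (aV 0 0 1 t01) (aV 0 0 1 t01) le
  · exact k1 (aT 0 1 0 (by decide)) (aT 0 1 0 (by decide)) le
  · exact k2 (aT 0 1 0 (by decide)) (aT 0 1 0 (by decide)) (aT 2 1 1 (by decide)) (aV 1 0 1 t01)
      le_rfl
  · exact k2 (aT 0 1 0 (by decide)) (aT 0 1 0 (by decide)) (aV 2 1 0 t10) (aT 1 2 0 (by decide))
      le_rfl
  · exact k0 (by decide)
  · exact k1 (aT 0 3 0 (by decide)) (aT 0 3 0 (by decide)) le
  · exact k2 (aT 0 3 0 (by decide)) (aT 0 3 0 (by decide)) (aT 2 3 1 (by decide)) (aV 3 0 1 t01)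
      le_rfl

theorem three_aux {p : Fin 3 × Fin 2 → ℕ} (h0 : ∑ i, p (i, 0) = 1) (h1 : ∑ i, p (i, 1) = 1)
    {c : Fin 3} (hc0 : p (c, 0) = 0) (hc1 : p (c, 1) = 0) {q : Fin 3 × Fin 2 → ℕ}
    (h : RubblingReach (prism 3) p q) : q ≤ p ∨ (∑ v, q v ≤ 1 ∧ q (c, 0) = 0) := by
  induction h with
  | refl => exact Or.inl le_rfl
  | @tail q q' _ hs ih =>
    right
    obtain ⟨v, w, u, hv, hw, hx⟩ := step_form hs
    have hsum := Finset.sum_le_sum (s := Finset.univ) fun x _ => hx x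
    simp only [Finset.sum_add_distrib, Finset.sum_ite_eq', Finset.mem_univ, if_true] at hsum
    rcases ih with ih | ⟨ih, -⟩
    · have ih : ∀ x, q x ≤ p x := ih
      have hqs : ∑ v, q v ≤ ∑ v, p v := Finset.sum_le_sum fun x _ => ih x
      have hps := sum_split p
      refine ⟨by omega, ?_⟩
      by_contra hne
      have e1 := hx (c, 0)
      have e2 := ih (c, 0)
      have hu : (c, 0) = u := by
        by_contra hcu
        rw [if_neg hcu] at e1
        omega
      subst hu
      have x1 := hx (c, 1)
      have x2 := hx (c - 1, 0)
      have x3 := hx (c + 1, 0)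
      have i1 := ih (c, 1)
      have i2 := ih (c - 1, 0)
      have i3 := ih (c + 1, 0)
      obtain ⟨a, tv⟩ := v
      obtain ⟨b, tw⟩ := w
      rw [prism_adj (m := 0)] at hv hw
      have n1 : c + 1 ≠ c - 1 := (by decide : ∀ c : Fin 3, c + 1 ≠ c - 1) c
      have n2 : c - 1 ≠ c + 1 := n1.symm
      have n3 : c + 1 ≠ c := by simp
      have n4 : c - 1 ≠ c := by simp
      have hsum0 : p (c, 0) + p (c - 1, 0) + p (c + 1, 0) = 1 := by
        rw [Fin.sum_univ_three] at h0
        have hc : c = 0 ∨ c = 1 ∨ c = 2 :=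
          (by decide : ∀ c : Fin 3, c = 0 ∨ c = 1 ∨ c = 2) c
        rcases hc with rfl | rfl | rfl
        · change p (0, 0) + p (2, 0) + p (1, 0) = 1; omega
        · change p (1, 0) + p (0, 0) + p (2, 0) = 1; omega
        · change p (2, 0) + p (1, 0) + p (0, 0) = 1; omega
      have t1 : ∀ t : Fin 2, t ≠ 0 → t = 1 := by decide
      rcases hv with ⟨rfl, rfl | rfl⟩ | ⟨rfl, hv⟩ <;> rcases hw with ⟨rfl, rfl | rfl⟩ | ⟨rfl, hw⟩
      all_goals
        try have hv' := t1 _ hv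
        try have hw' := t1 _ hw
        try subst hv'
        try subst hw'
        simp [n1, n2, n3, n4, n3.symm, n4.symm] at x1 x2 x3
        omega
    · have : ∑ v, q' v = 0 := by omega
      exact ⟨by omega, by simpa using Finset.sum_eq_zero_iff.1 this (c, 0) (Finset.mem_univ _)⟩

theorem opt_three : optRub (prism 3) = 3 := by
  have t01 : (0 : Fin 2) ≠ 1 := by decide
  have t10 : (1 : Fin 2) ≠ 0 := by decide
  have aT : ∀ i j : Fin 3, ∀ s : Fin 2, (i = j - 1 ∨ i = j + 1) → (prism 3).Adj (i, s) (j, s) :=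
    fun i j s h => (prism_adj (m := 0)).2 (Or.inl ⟨rfl, h⟩)
  have aV : ∀ i : Fin 3, ∀ s t : Fin 2, s ≠ t → (prism 3).Adj (i, s) (i, t) :=
    fun i s t h => (prism_adj (m := 0)).2 (Or.inr ⟨rfl, h⟩)
  refine opt_eq (pt (0, 0) + pt (1, 1) + pt (2, 0)) ?_ (by decide) ?_
  · rintro ⟨i, s⟩
    have hi : i = 0 ∨ i = 1 ∨ i = 2 := by revert i; decide
    have hs : s = 0 ∨ s = 1 := by revert s; decide
    rcases hi with rfl | rfl | rfl <;> rcases hs with rfl | rfl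
    · exact k0 (by decide)
    · exact k1 (aV 0 0 1 t01) (aT 1 0 1 (by decide)) (le2 (by decide) (by decide) (by decide))
    · exact k1 (aT 0 1 0 (by decide)) (aT 2 1 0 (by decide))
        (le2 (by decide) (by decide) (by decide))
    · exact k0 (by decide)
    · exact k0 (by decide)
    · exact k1 (aV 2 0 1 t01) (aT 1 2 1 (by decide)) (le2 (by decide) (by decide) (by decide))
  · intro p hp
    by_contra hlt
    have w0 : 3 ≤ ∑ i : Fin 3, wt 0 p i := wt_lower (m := 0) hp 0
    have w1 : 3 ≤ ∑ i : Fin 3, wt 1 p i := wt_lower (m := 0) hp 1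
    simp only [wt, Finset.sum_add_distrib] at w0 w1
    have hsp := sum_split p
    have h0 : ∑ i, p (i, 0) = 1 := by omega
    have h1 : ∑ i, p (i, 1) = 1 := by omega
    have hc : ∃ c, p (c, 0) = 0 ∧ p (c, 1) = 0 := by
      by_contra hcon
      simp only [not_exists, not_and] at hcon
      have c0 := hcon 0
      have c1 := hcon 1
      have c2 := hcon 2
      rw [Fin.sum_univ_three] at h0 h1
      omega
    obtain ⟨c, hc0, hc1⟩ := hc
    obtain ⟨q, hq, hq1⟩ := hp (c, 0)
    rcases three_aux h0 h1 hc0 hc1 hq with h | ⟨-, h⟩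
    · have : q (c, 0) ≤ p (c, 0) := h (c, 0)
      omega
    · omega

end Rub

/-- The optimal rubbling numbers of the `n`-prisms. -/
theorem optRub_prism :
    (∀ k : ℕ, 2 ≤ k →
      optRub (prism (3 * k - 1)) = 2 * k ∧ optRub (prism (3 * k)) = 2 * k) ∧
    (∀ k : ℕ, 1 ≤ k → optRub (prism (3 * k + 1)) = 2 * k + 1) ∧
    optRub (prism 3) = 3 := by
  refine ⟨fun k hk => ⟨?_, ?_⟩, fun k hk => ?_, Rub.opt_three⟩
  · rw [Rub.opt_big (by omega)]; omega
  · rw [Rub.opt_big (by omega)]; omega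
  · rcases Nat.lt_or_ge k 2 with h | h
    · obtain rfl : k = 1 := by omega
      exact Rub.opt_four
    · rw [Rub.opt_big (by omega)]; omega
end
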